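/- arXiv:1408.1742 — 3 statements merged into one kernel-verified Lean document; each statement's English description precedes it below -/
import Mathlib

section
/- Let s ≥ 2, let ψ : [0,1]^{s-1} → ℝ≥0 be measurable with ψ ≤ L (0 < L < ∞), C = ∫_{[0,1]^{s-1}} ψ > 0, A = {z ∈ [0,1]^s : ψ(z_1,…,z_{s-1}) ≥ L z_s}, and assume ∂A admits an (s−1)-dimensional Minkowski content M_A ∈ (0,∞). With the product measure μ_m = ⊗_c Unif(Q_c) over the M = m^s grid cubes, N = #{c : x_c ∈ A} and Y the projections of the accepted points onto the first s−1 coordinates, there exists m_0 such that for all m ≥ m_0 and every real q with 2 ≤ q < ∞: (E_{μ_m}[N^q L_{q,N,ψ}^q(Y)])^{1/q} ≤ (3 s^{1/2} M_A m^{s−1})^{1 − 1/q}, where L_{q,N,ψ}(Y) = (∫_{[0,1]^{s-1}} |(1/N) Σ_{n=0}^{N−1} 1_{[0,t)}(y_n) − (1/C) ∫_{[0,t)} ψ|^q dt)^{1/q}. -/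
open MeasureTheory Set Filter

/-- The half-open anchored box `[0,t) = ∏_j [0, t_j)`. -/
def lowerBox {d : ℕ} (t : Fin d → ℝ) : Set (Fin d → ℝ) :=
  {y | ∀ i, 0 ≤ y i ∧ y i < t i}

/-- The region `A = {z ∈ [0,1]^s : ψ(z_1,…,z_{s-1}) ≥ L z_s}` (with `s = d+1`). -/
def graphRegion {d : ℕ} (ψ : (Fin d → ℝ) → ℝ) (L : ℝ) : Set ((Fin d → ℝ) × ℝ) :=
  {z | z.1 ∈ Icc (0 : Fin d → ℝ) 1 ∧ z.2 ∈ Icc (0 : ℝ) 1 ∧ L * z.2 ≤ ψ z.1}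

/-- The test set `J_t* = ([0,t) × [0,1]) ∩ A`. -/
def Jstar {d : ℕ} (ψ : (Fin d → ℝ) → ℝ) (L : ℝ) (t : Fin d → ℝ) : Set ((Fin d → ℝ) × ℝ) :=
  (lowerBox t ×ˢ Icc (0 : ℝ) 1) ∩ graphRegion ψ L

/-- The closed Euclidean `ε`-neighborhood of a set `E ⊆ ℝ^{d} × ℝ = ℝ^{d+1}`. -/
def euclNbhdP {d : ℕ} (E : Set ((Fin d → ℝ) × ℝ)) (ε : ℝ) : Set ((Fin d → ℝ) × ℝ) :=
  {x | ∃ y ∈ E, Real.sqrt ((∑ i, (x.1 i - y.1 i) ^ 2) + (x.2 - y.2) ^ 2) ≤ ε}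

/-- `∂A` admits the `(s-1)`-dimensional Minkowski content `M` (with `s = d+1`). -/
def HasMinkowskiContentP {d : ℕ} (A : Set ((Fin d → ℝ) × ℝ)) (M : ℝ) : Prop :=
  Tendsto (fun ε : ℝ => (volume (euclNbhdP (frontier A) ε)).toReal / (2 * ε))
    (nhdsWithin 0 (Set.Ioi 0)) (nhds M)

/-- The grid cube `Q_c = ∏_{j=1}^{d+1} [c_j/m, (c_j+1)/m)`. -/
def gridCubeP {d m : ℕ} (c : (Fin d → Fin m) × Fin m) : Set ((Fin d → ℝ) × ℝ) :=
  {z | (∀ i, (c.1 i : ℝ) / m ≤ z.1 i ∧ z.1 i < ((c.1 i : ℝ) + 1) / m) ∧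
       ((c.2 : ℝ) / m ≤ z.2 ∧ z.2 < ((c.2 : ℝ) + 1) / m)}

/-- The stratified-input measure `μ_m = ⊗_c Unif(Q_c)`: the product over all grid cubes of
the uniform probability distribution on `Q_c`. -/
noncomputable def stratifiedMeasure (d m : ℕ) :
    Measure (((Fin d → Fin m) × Fin m) → (Fin d → ℝ) × ℝ) :=
  Measure.pi fun c => (volume (gridCubeP c))⁻¹ • volume.restrict (gridCubeP c)

section helpers

def bx {d : ℕ} (a b : Fin d → ℝ) (α β : ℝ) : Set ((Fin d → ℝ) × ℝ) :=
  {z | (∀ i, a i ≤ z.1 i ∧ z.1 i < b i) ∧ (α ≤ z.2 ∧ z.2 < β)}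

lemma bx_eq {d : ℕ} (a b : Fin d → ℝ) (α β : ℝ) :
    bx a b α β = (Set.pi univ (fun i => Ico (a i) (b i))) ×ˢ Ico α β := by
  ext z; simp [bx, Set.mem_pi]

lemma bx_meas {d : ℕ} (a b : Fin d → ℝ) (α β : ℝ) : MeasurableSet (bx a b α β) := by
  rw [bx_eq]
  exact (MeasurableSet.univ_pi fun i => measurableSet_Ico).prod measurableSet_Ico

lemma bx_vol {d : ℕ} (a b : Fin d → ℝ) (α β : ℝ) :
    volume (bx a b α β) = (∏ i, ENNReal.ofReal (b i - a i)) * ENNReal.ofReal (β - α) := by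
  rw [bx_eq, Measure.volume_eq_prod, Measure.prod_prod, Real.volume_pi_Ico, Real.volume_Ico]

lemma grid_eq {d m : ℕ} (c : (Fin d → Fin m) × Fin m) :
    gridCubeP c = bx (fun i => (c.1 i : ℝ) / m) (fun i => ((c.1 i : ℝ) + 1) / m)
      ((c.2 : ℝ) / m) (((c.2 : ℝ) + 1) / m) := rfl

lemma grid_meas {d m : ℕ} (c : (Fin d → Fin m) × Fin m) : MeasurableSet (gridCubeP c) := by
  rw [grid_eq]; exact bx_meas _ _ _ _

lemma grid_vol {d m : ℕ} (c : (Fin d → Fin m) × Fin m) :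
    volume (gridCubeP c) = ENNReal.ofReal ((1 / (m : ℝ)) ^ (d + 1)) := by
  rw [grid_eq, bx_vol]
  have : ∀ x : ℝ, (x + 1) / m - x / m = 1 / m := fun x => by ring
  simp only [this]
  rw [Finset.prod_const, pow_succ, ENNReal.ofReal_mul (by positivity),
    ENNReal.ofReal_pow (by positivity)]
  simp

lemma nbhd_mem {d : ℕ} {E : Set ((Fin d → ℝ) × ℝ)} {h : ℝ} (hh : 0 ≤ h)
    {z p : (Fin d → ℝ) × ℝ} (hp : p ∈ E) (h1 : ∀ j, |z.1 j - p.1 j| ≤ h)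
    (h2 : |z.2 - p.2| ≤ h) : z ∈ euclNbhdP E (Real.sqrt (d + 1) * h) := by
  refine ⟨p, hp, ?_⟩
  apply Real.sqrt_le_iff.2
  refine ⟨by positivity, ?_⟩
  rw [mul_pow, Real.sq_sqrt (by positivity)]
  have e1 : ∑ i, (z.1 i - p.1 i) ^ 2 ≤ ∑ i : Fin d, h ^ 2 :=
    Finset.sum_le_sum fun i _ => by rw [← sq_abs]; gcongr; exact h1 i
  have e2 : (z.2 - p.2) ^ 2 ≤ h ^ 2 := by rw [← sq_abs]; gcongr
  simp at e1
  nlinarith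

lemma frontier_sub {d : ℕ} (ψ : (Fin d → ℝ) → ℝ) (L : ℝ) :
    frontier (graphRegion ψ L) ⊆ Icc (0 : Fin d → ℝ) 1 ×ˢ Icc (0 : ℝ) 1 := by
  refine frontier_subset_closure.trans (closure_minimal ?_ (isClosed_Icc.prod isClosed_Icc))
  intro z hz; exact ⟨hz.1, hz.2.1⟩

lemma nbhd_fin {d : ℕ} (ψ : (Fin d → ℝ) → ℝ) (L ε : ℝ) :
    volume (euclNbhdP (frontier (graphRegion ψ L)) ε) < ⊤ := by
  have hs : euclNbhdP (frontier (graphRegion ψ L)) ε ⊆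
      Icc (fun _ : Fin d => -ε) (fun _ => 1 + ε) ×ˢ Icc (-ε) (1 + ε) := by
    rintro z ⟨y, hy, hd⟩
    obtain ⟨hy1, hy2⟩ := frontier_sub ψ L hy
    have hε : 0 ≤ ε := (Real.sqrt_nonneg _).trans hd
    have hsq := (Real.sqrt_le_left hε).1 hd
    have k2 : |z.2 - y.2| ≤ ε := by
      apply abs_le_of_sq_le_sq _ hε
      have : 0 ≤ ∑ i, (z.1 i - y.1 i) ^ 2 := Finset.sum_nonneg fun i _ => sq_nonneg _
      linarith
    have k1 : ∀ i, |z.1 i - y.1 i| ≤ ε := by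
      intro i
      apply abs_le_of_sq_le_sq _ hε
      have := Finset.single_le_sum (f := fun i => (z.1 i - y.1 i) ^ 2)
        (fun i _ => sq_nonneg _) (Finset.mem_univ i)
      have h0 := sq_nonneg (z.2 - y.2)
      linarith
    refine ⟨⟨fun i => ?_, fun i => ?_⟩, ?_, ?_⟩
    · have := abs_le.1 (k1 i); have := hy1.1 i; simp at *; linarith
    · have := abs_le.1 (k1 i); have := hy1.2 i; simp at *; linarith
    · have := abs_le.1 k2; have := hy2.1; linarith
    · have := abs_le.1 k2; have := hy2.2; linarith
  refine (measure_mono hs).trans_lt ?_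
  exact (isCompact_Icc.prod isCompact_Icc).measure_lt_top

lemma sum_vol_le {d : ℕ} {ι : Type*} (s : Finset ι) (D : ι → Set ((Fin d → ℝ) × ℝ)) (v : ℝ)
    (hv : 0 ≤ v) (E : Set ((Fin d → ℝ) × ℝ)) (hE : volume E < ⊤)
    (hm : ∀ i ∈ s, MeasurableSet (D i)) (hvol : ∀ i ∈ s, volume (D i) = ENNReal.ofReal v)
    (hdis : (s : Set ι).PairwiseDisjoint D) (hsub : ∀ i ∈ s, D i ⊆ E) :
    (s.card : ℝ) * v ≤ (volume E).toReal := by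
  have h1 : volume (⋃ i ∈ s, D i) ≤ volume E := measure_mono (by simpa using hsub)
  rw [measure_biUnion_finset hdis hm, Finset.sum_congr rfl hvol, Finset.sum_const] at h1
  have h2 := ENNReal.toReal_mono hE.ne h1
  simpa [hv] using h2

lemma grid_disj {d m : ℕ} (hm : 0 < m) {c c' : (Fin d → Fin m) × Fin m}
    {z : (Fin d → ℝ) × ℝ} (h : z ∈ gridCubeP c) (h' : z ∈ gridCubeP c') : c = c' := by
  have hm' : (0 : ℝ) < m := by exact_mod_cast hm
  have key : ∀ (a b : ℕ) (x : ℝ), (a : ℝ) / m ≤ x → x < ((b : ℝ) + 1) / m → a ≤ b := by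
    intro a b x h1 h2
    have := h1.trans_lt h2
    rw [div_lt_div_iff_of_pos_right hm'] at this
    exact Nat.lt_succ_iff.1 (by exact_mod_cast this)
  refine Prod.ext (funext fun i => Fin.ext ?_) (Fin.ext ?_)
  · exact le_antisymm (key _ _ _ (h.1 i).1 (h'.1 i).2) (key _ _ _ (h'.1 i).1 (h.1 i).2)
  · exact le_antisymm (key _ _ _ h.2.1 h'.2.2) (key _ _ _ h'.2.1 h.2.2)

lemma grid_convex {d m : ℕ} (c : (Fin d → Fin m) × Fin m) : Convex ℝ (gridCubeP c) := by
  rw [grid_eq, bx_eq]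
  exact (convex_pi fun i _ => convex_Ico _ _).prod (convex_Ico _ _)

lemma grid_close {d m : ℕ} {c : (Fin d → Fin m) × Fin m}
    {z p : (Fin d → ℝ) × ℝ} (h : z ∈ gridCubeP c) (h' : p ∈ gridCubeP c) :
    (∀ j, |z.1 j - p.1 j| ≤ 1 / m) ∧ |z.2 - p.2| ≤ 1 / m := by
  have e : ∀ x : ℝ, (x + 1) / m = x / m + 1 / m := fun x => by ring
  constructor
  · intro j
    have h1 := h.1 j; have h2 := h'.1 j
    rw [e] at h1 h2
    rw [abs_le]; constructor <;> linarith [h1.1, h1.2, h2.1, h2.2]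
  · have h1 := h.2; have h2 := h'.2
    rw [e] at h1 h2
    rw [abs_le]; constructor <;> linarith [h1.1, h1.2, h2.1, h2.2]

lemma cross {X : Type*} [TopologicalSpace X] {S A : Set X} (hS : IsPreconnected S)
    (h1 : (S ∩ A).Nonempty) (h2 : (S ∩ Aᶜ).Nonempty) : (S ∩ frontier A).Nonempty := by
  by_contra hne
  rw [Set.not_nonempty_iff_eq_empty] at hne
  have hn : ∀ x ∈ S, x ∉ frontier A := fun x hx hf => by
    have : x ∈ S ∩ frontier A := ⟨hx, hf⟩
    rw [hne] at this; exact this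
  have hcase : ∀ x ∈ S, x ∈ interior A ∨ x ∈ (closure A)ᶜ := by
    intro x hx
    by_cases hc : x ∈ closure A
    · left; by_contra hi; exact hn x hx ⟨hc, hi⟩
    · right; exact hc
  obtain ⟨a, haS, haA⟩ := h1
  obtain ⟨b, hbS, hbA⟩ := h2
  obtain ⟨x, _, hx1, hx2⟩ := hS (interior A) (closure A)ᶜ isOpen_interior isClosed_closure.isOpen_compl
    (fun x hx => hcase x hx)
    ⟨a, haS, (hcase a haS).resolve_right fun h => h (subset_closure haA)⟩
    ⟨b, hbS, (hcase b hbS).resolve_left fun h => hbA (interior_subset h)⟩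
  exact hx2 (subset_closure (interior_subset hx1))

lemma claim_a {d m : ℕ} (hm : 0 < m) (ψ : (Fin d → ℝ) → ℝ) (L : ℝ)
    (hψ0 : ∀ z ∈ Icc (0 : Fin d → ℝ) 1, 0 ≤ ψ z)
    (B : Finset ((Fin d → Fin m) × Fin m))
    (hB : ∀ c ∈ B, (gridCubeP c ∩ graphRegion ψ L).Nonempty ∧ ¬ gridCubeP c ⊆ graphRegion ψ L) :
    (B.card : ℝ) * (1 / (m : ℝ)) ^ (d + 1) + 1 / m ≤
      (volume (euclNbhdP (frontier (graphRegion ψ L)) (Real.sqrt (d + 1) * (1 / m)))).toReal := by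
  have hm' : (0 : ℝ) < m := by exact_mod_cast hm
  set E := euclNbhdP (frontier (graphRegion ψ L)) (Real.sqrt (d + 1) * (1 / m)) with hEdef
  have hE : volume E < ⊤ := nbhd_fin _ _ _
  set S := bx (fun _ : Fin d => (0 : ℝ)) (fun _ => 1) (-(1 / m)) 0 with hS
  have hSv : volume S = ENNReal.ofReal (1 / m) := by
    rw [hS, bx_vol]; simp
  have hSE : S ⊆ E := by
    rintro z ⟨hz1, hz2⟩
    refine nbhd_mem (p := (z.1, 0)) (by positivity) ?_ (by intro j; simp) ?_
    · have hz : z.1 ∈ Icc (0 : Fin d → ℝ) 1 := ⟨fun i => (hz1 i).1, fun i => (hz1 i).2.le⟩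
      have hin : (z.1, (0 : ℝ)) ∈ graphRegion ψ L := ⟨hz, by simp, by simpa using hψ0 _ hz⟩
      rw [frontier_eq_closure_inter_closure]
      refine ⟨subset_closure hin, ?_⟩
      have hc : Tendsto (fun τ : ℝ => (z.1, τ)) (nhdsWithin 0 (Iio 0)) (nhds (z.1, (0 : ℝ))) := by
        have : Continuous (fun τ : ℝ => (z.1, τ)) := by fun_prop
        exact (this.tendsto 0).mono_left nhdsWithin_le_nhds
      refine mem_closure_of_tendsto hc ?_
      filter_upwards [self_mem_nhdsWithin] with τ hτ hmem
      exact absurd hmem.2.1.1 (not_le.2 hτ)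
    · simp only [sub_zero]; rw [abs_le]; constructor <;> linarith [hz2.1, hz2.2, (by positivity : 0 ≤ 1 / (m : ℝ))]
  have h1 := sum_vol_le B (fun c => gridCubeP c) ((1 / (m : ℝ)) ^ (d + 1)) (by positivity) (E \ S)
    ((measure_mono sdiff_subset).trans_lt hE) (fun c _ => grid_meas c) (fun c _ => grid_vol c)
    (by
      intro c _ c' _ hne
      rw [Function.onFun, Set.disjoint_left]
      intro z hz hz'
      exact hne (grid_disj hm hz hz'))
    (by
      intro c hc z hz
      obtain ⟨⟨x, hxQ, hxA⟩, hn⟩ := hB c hc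
      have hpre := (grid_convex c).isPreconnected
      obtain ⟨y, hyQ, hyA⟩ := Set.not_subset.1 hn
      obtain ⟨p, hpQ, hpF⟩ := cross hpre ⟨x, hxQ, hxA⟩ ⟨y, hyQ, hyA⟩
      obtain ⟨g1, g2⟩ := grid_close hz hpQ
      refine ⟨nbhd_mem (by positivity) hpF g1 g2, fun hzS => ?_⟩
      have := hz.2.1
      have h0 : 0 ≤ (c.2 : ℝ) / m := by positivity
      linarith [hzS.2.2])
  have h2 : volume (E \ S) + volume S = volume E := by
    rw [← measure_sdiff_add_inter E (bx_meas _ _ _ _ : MeasurableSet S), inter_eq_right.2 hSE]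
  have h3 : (volume E).toReal = (volume (E \ S)).toReal + 1 / m := by
    rw [← h2, ENNReal.toReal_add (by exact ((measure_mono sdiff_subset).trans_lt hE).ne) (by rw [hSv]; simp), hSv,
      ENNReal.toReal_ofReal (by positivity)]
  linarith

lemma tube {d m : ℕ} (hm : 0 < m) (ψ : (Fin d → ℝ) → ℝ) (L : ℝ)
    (c : (Fin d → Fin m) × Fin m) (hc : gridCubeP c ⊆ graphRegion ψ L) (i : Fin d) :
    ∃ τ : ℝ, ((c.1 i : ℝ) + 1) / m ≤ τ ∧
      bx (Function.update (fun j => (c.1 j : ℝ) / m) i (τ - 1 / m))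
        (Function.update (fun j => ((c.1 j : ℝ) + 1) / m) i (τ + 1 / m))
        ((c.2 : ℝ) / m) (((c.2 : ℝ) + 1) / m) ⊆
      euclNbhdP (frontier (graphRegion ψ L)) (Real.sqrt (d + 1) * (1 / m)) := by
  have hm' : (0 : ℝ) < m := by exact_mod_cast hm
  have e : ∀ x : ℝ, (x + 1) / m = x / m + 1 / m := fun x => by ring
  have hpos : 0 < 1 / (m : ℝ) := by positivity
  set u : Fin d → ℝ := fun j => (c.1 j : ℝ) / m + (1 / m) / 2 with hu
  set w : ℝ := (c.2 : ℝ) / m + (1 / m) / 2 with hw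
  let l : ℝ → (Fin d → ℝ) × ℝ := fun τ => (Function.update u i τ, w)
  have hl : Continuous l := by
    have : Continuous fun τ : ℝ => Function.update u i τ := continuous_const.update i continuous_id
    fun_prop
  have hui : u i ≤ 2 := by
    have h1 : ((c.1 i : ℝ) + 1) ≤ m := by exact_mod_cast (c.1 i).2
    have h2 : ((c.1 i : ℝ) + 1) / m ≤ 1 := by rw [div_le_one hm']; exact h1
    rw [e] at h2
    simp only [hu]; linarith
  have hpre : IsPreconnected (l '' Icc (u i) 2) := isPreconnected_Icc.image _ hl.continuousOn
  have hstart : l (u i) ∈ graphRegion ψ L := by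
    apply hc
    simp only [l, Function.update_eq_self]
    refine ⟨fun j => ?_, ?_⟩ <;> simp only [hu, hw, e] <;> constructor <;> linarith
  have hend : l 2 ∉ graphRegion ψ L := by
    intro h
    have := h.1.2 i
    simp [l] at this
  obtain ⟨p, ⟨τ, hτ, rfl⟩, hpF⟩ := cross hpre
    ⟨_, ⟨u i, ⟨le_rfl, hui⟩, rfl⟩, hstart⟩ ⟨_, ⟨2, ⟨hui, le_rfl⟩, rfl⟩, hend⟩
  refine ⟨τ, ?_, ?_⟩
  · by_contra hlt
    push Not at hlt
    let O : Set ((Fin d → ℝ) × ℝ) :=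
      (Set.pi univ fun j => Ioo ((c.1 j : ℝ) / m) (((c.1 j : ℝ) + 1) / m)) ×ˢ
        Ioo ((c.2 : ℝ) / m) (((c.2 : ℝ) + 1) / m)
    have hO : IsOpen O := (isOpen_set_pi finite_univ fun j _ => isOpen_Ioo).prod isOpen_Ioo
    have hOA : O ⊆ graphRegion ψ L := by
      refine Subset.trans ?_ hc
      rintro z ⟨h1, h2⟩
      exact ⟨fun j => ⟨(h1 j trivial).1.le, (h1 j trivial).2⟩, h2.1.le, h2.2⟩
    have hpO : l τ ∈ O := by
      refine ⟨fun j _ => ?_, ?_⟩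
      · by_cases hj : j = i
        · subst hj
          have := hτ.1
          simp only [hu] at this
          simp only [l, Function.update_self]
          exact ⟨by linarith, hlt⟩
        · simp only [l, Function.update_of_ne hj, hu, e]; constructor <;> linarith
      · simp only [l, hw, e]; constructor <;> linarith
    exact hpF.2 (interior_maximal hOA hO hpO)
  · rintro z ⟨h1, h2⟩
    refine nbhd_mem hpos.le hpF (fun j => ?_) ?_
    · have := h1 j
      by_cases hj : j = i
      · subst hj
        simp only [Function.update_self] at this
        simp only [l, Function.update_self]
        rw [abs_le]; constructor <;> linarith [this.1, this.2]
      · simp only [Function.update_of_ne hj, e] at this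
        simp only [l, Function.update_of_ne hj, hu]
        rw [abs_le]; constructor <;> linarith [this.1, this.2]
    · rw [e] at h2
      simp only [l, hw]
      rw [abs_le]; constructor <;> linarith [h2.1, h2.2]

lemma claim_b {d m : ℕ} (hm : 0 < m) (ψ : (Fin d → ℝ) → ℝ) (L : ℝ) (k : Fin d → ℕ)
    (W : Finset ((Fin d → Fin m) × Fin m))
    (hW : ∀ c ∈ W, gridCubeP c ⊆ graphRegion ψ L ∧ (∀ j, (c.1 j : ℕ) ≤ k j) ∧
      ∃ i, (c.1 i : ℕ) = k i) :
    (W.card : ℝ) * (2 * (1 / (m : ℝ)) ^ (d + 1)) ≤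
      (volume (euclNbhdP (frontier (graphRegion ψ L)) (Real.sqrt (d + 1) * (1 / m)))).toReal := by
  classical
  have hm' : (0 : ℝ) < m := by exact_mod_cast hm
  rcases W.eq_empty_or_nonempty with rfl | hW0
  · simp
  have e : ∀ x : ℝ, (x + 1) / m = x / m + 1 / m := fun x => by ring
  have H : ∀ c : (Fin d → Fin m) × Fin m, ∃ x : Fin d × ℝ, c ∈ W → ((c.1 x.1 : ℕ) = k x.1 ∧
      ((c.1 x.1 : ℝ) + 1) / m ≤ x.2 ∧
      bx (Function.update (fun j => (c.1 j : ℝ) / m) x.1 (x.2 - 1 / m))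
        (Function.update (fun j => ((c.1 j : ℝ) + 1) / m) x.1 (x.2 + 1 / m))
        ((c.2 : ℝ) / m) (((c.2 : ℝ) + 1) / m) ⊆
      euclNbhdP (frontier (graphRegion ψ L)) (Real.sqrt (d + 1) * (1 / m))) := by
    intro c
    by_cases hc : c ∈ W
    · obtain ⟨h1, h2, i, hi⟩ := hW c hc
      obtain ⟨τ, hτ1, hτ2⟩ := tube hm ψ L c h1 i
      exact ⟨(i, τ), fun _ => ⟨hi, hτ1, hτ2⟩⟩
    · obtain ⟨c', hc'⟩ := hW0
      obtain ⟨_, _, i, _⟩ := hW c' hc'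
      exact ⟨(i, 0), fun h => absurd h hc⟩
  choose x hx using H
  refine sum_vol_le W (fun c => bx (Function.update (fun j => (c.1 j : ℝ) / m) (x c).1 ((x c).2 - 1 / m))
        (Function.update (fun j => ((c.1 j : ℝ) + 1) / m) (x c).1 ((x c).2 + 1 / m))
        ((c.2 : ℝ) / m) (((c.2 : ℝ) + 1) / m)) _ (by positivity) _ (nbhd_fin _ _ _)
        (fun c _ => bx_meas _ _ _ _) ?_ ?_ (fun c hc => (hx c hc).2.2)
  · intro c hc
    rw [bx_vol]
    have hp : ∀ j, ENNReal.ofReal (Function.update (fun j => ((c.1 j : ℝ) + 1) / m) (x c).1 ((x c).2 + 1 / m) j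
        - Function.update (fun j => (c.1 j : ℝ) / m) (x c).1 ((x c).2 - 1 / m) j)
        = (if j = (x c).1 then ENNReal.ofReal 2 else 1) * ENNReal.ofReal (1 / m) := by
      intro j
      split_ifs with hj
      · rw [hj]; simp only [Function.update_self]
        rw [← ENNReal.ofReal_mul (by norm_num)]; congr 1; ring
      · simp only [Function.update_of_ne hj]; rw [one_mul]; congr 1; ring
    rw [Finset.prod_congr rfl fun j _ => hp j, Finset.prod_mul_distrib, Finset.prod_ite_eq' Finset.univ]
    rw [ENNReal.ofReal_mul (by norm_num), ENNReal.ofReal_pow (by positivity), pow_succ, e,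
      add_sub_cancel_left]
    simp [mul_assoc]
  · have key : ∀ (a b : ℕ) (x : ℝ), (a : ℝ) / m ≤ x → x < ((b : ℝ) + 1) / m → a ≤ b := by
      intro a b x h1 h2
      have := h1.trans_lt h2
      rw [div_lt_div_iff_of_pos_right hm'] at this
      exact Nat.lt_succ_iff.1 (by exact_mod_cast this)
    -- one-sided comparison
    have half : ∀ c ∈ W, ∀ c' ∈ W, ∀ z : (Fin d → ℝ) × ℝ,
        z ∈ bx (Function.update (fun j => (c.1 j : ℝ) / m) (x c).1 ((x c).2 - 1 / m))
        (Function.update (fun j => ((c.1 j : ℝ) + 1) / m) (x c).1 ((x c).2 + 1 / m))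
        ((c.2 : ℝ) / m) (((c.2 : ℝ) + 1) / m) →
        z ∈ bx (Function.update (fun j => (c'.1 j : ℝ) / m) (x c').1 ((x c').2 - 1 / m))
        (Function.update (fun j => ((c'.1 j : ℝ) + 1) / m) (x c').1 ((x c').2 + 1 / m))
        ((c'.2 : ℝ) / m) (((c'.2 : ℝ) + 1) / m) → (∀ j, (c.1 j : ℕ) ≤ c'.1 j) ∧ (c.2 : ℕ) ≤ c'.2 := by
      intro c hc c' hc' z hz hz'
      refine ⟨fun j => ?_, key _ _ _ hz.2.1 hz'.2.2⟩
      have hlow : ((c.1 j : ℕ) : ℝ) / m ≤ z.1 j := by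
        have h1 := (hz.1 j).1
        by_cases hj : j = (x c).1
        · rw [hj] at h1 ⊢
          simp only [Function.update_self] at h1
          have := (hx c hc).2.1
          rw [e] at this; linarith
        · simpa only [Function.update_of_ne hj] using h1
      by_cases hj : j = (x c').1
      · have h2 := (hx c' hc').1
        rw [← hj] at h2
        rw [h2]; exact (hW c hc).2.1 j
      · have h1 := (hz'.1 j).2
        simp only [Function.update_of_ne hj] at h1
        exact key _ _ _ hlow h1
    intro c hc c' hc' hne
    rw [Function.onFun, Set.disjoint_left]
    intro z hz hz'
    have g1 := half c hc c' hc' z hz hz'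
    have g2 := half c' hc' c hc z hz' hz
    exact hne (Prod.ext (funext fun j => Fin.ext (le_antisymm (g1.1 j) (g2.1 j)))
      (Fin.ext (le_antisymm g1.2 g2.2)))

lemma count {d : ℕ} (ψ : (Fin d → ℝ) → ℝ) (L : ℝ)
    (hψ0 : ∀ z ∈ Icc (0 : Fin d → ℝ) 1, 0 ≤ ψ z) (MA : ℝ)
    (hMink : HasMinkowskiContentP (graphRegion ψ L) MA) :
    ∃ m₀ : ℕ, ∀ m : ℕ, m₀ ≤ m → 0 < m ∧ ∀ (k : Fin d → ℕ)
      (B W : Finset ((Fin d → Fin m) × Fin m)),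
      (∀ c ∈ B, (gridCubeP c ∩ graphRegion ψ L).Nonempty ∧ ¬ gridCubeP c ⊆ graphRegion ψ L) →
      (∀ c ∈ W, gridCubeP c ⊆ graphRegion ψ L ∧ (∀ j, (c.1 j : ℕ) ≤ k j) ∧
        ∃ i, (c.1 i : ℕ) = k i) →
      (B.card : ℝ) + W.card ≤ 3 * Real.sqrt (d + 1) * MA * (m : ℝ) ^ d := by
  set r := Real.sqrt (d + 1) with hr
  have hr0 : 0 < r := Real.sqrt_pos.2 (by positivity)
  have hlim : Tendsto (fun m : ℕ => r * (1 / (m : ℝ))) atTop (nhdsWithin 0 (Ioi 0)) := by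
    rw [tendsto_nhdsWithin_iff]
    constructor
    · simpa using (tendsto_one_div_atTop_nhds_zero_nat (𝕜 := ℝ)).const_mul r
    · filter_upwards [eventually_gt_atTop 0] with m hm
      have : (0 : ℝ) < m := by exact_mod_cast hm
      exact mul_pos hr0 (by positivity)
  have h1 := (hMink.comp hlim).eventually_lt_const (show MA < MA + 1 / (3 * r) by
    have : 0 < 1 / (3 * r) := by positivity
    linarith)
  obtain ⟨m₀, hm₀⟩ := eventually_atTop.1 (h1.and (eventually_gt_atTop 0))
  refine ⟨m₀, fun m hm => ⟨(hm₀ m hm).2, fun k B W hB hW => ?_⟩⟩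
  obtain ⟨h2, hpos⟩ := hm₀ m hm
  have hm' : (0 : ℝ) < m := by exact_mod_cast hpos
  have ha := claim_a hpos ψ L hψ0 B hB
  have hb := claim_b hpos ψ L k W hW
  simp only [Function.comp] at h2
  set v := (volume (euclNbhdP (frontier (graphRegion ψ L)) (r * (1 / m)))).toReal with hv
  rw [div_lt_iff₀ (by positivity)] at h2
  have hM : (0 : ℝ) < (m : ℝ) ^ d := by positivity
  have e1 : (1 / (m : ℝ)) ^ (d + 1) * ((m : ℝ) ^ d * m) = 1 := by
    rw [← pow_succ, ← mul_pow]; field_simp; simp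
  have ha' : (B.card : ℝ) + (m : ℝ) ^ d ≤ v * ((m : ℝ) ^ d * m) := by
    have := mul_le_mul_of_nonneg_right ha (show 0 ≤ (m : ℝ) ^ d * m by positivity)
    rw [add_mul, mul_assoc, e1] at this
    have e2 : 1 / (m : ℝ) * ((m : ℝ) ^ d * m) = (m : ℝ) ^ d := by field_simp
    linarith
  have hb' : 2 * (W.card : ℝ) ≤ v * ((m : ℝ) ^ d * m) := by
    have := mul_le_mul_of_nonneg_right hb (show 0 ≤ (m : ℝ) ^ d * m by positivity)
    rw [mul_assoc, mul_assoc, e1] at this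
    linarith
  have h3 : v * ((m : ℝ) ^ d * m) ≤ 2 * r * MA * (m : ℝ) ^ d + 2 / 3 * (m : ℝ) ^ d := by
    have := mul_le_mul_of_nonneg_right h2.le (show 0 ≤ (m : ℝ) ^ d * m by positivity)
    refine this.trans (le_of_eq ?_)
    field_simp
  nlinarith

lemma prob_core {ι Ω : Type*} [Fintype ι] [MeasurableSpace Ω] (μ : ι → Measure Ω)
    [∀ i, IsProbabilityMeasure (μ i)] (Q : ι → Set Ω) (hQ : ∀ i, ∀ᵐ x ∂(μ i), x ∈ Q i)
    (f : Ω → ℝ) (hf : Measurable f) (a : ℝ) (hfa : ∀ x, f x ∈ Icc a (a + 1))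
    (hsum : ∑ i, ∫ x, f x ∂(μ i) = 0) (s : Finset ι)
    (hs : ∀ i, i ∉ s → ∃ v, ∀ x ∈ Q i, f x = v) :
    (∀ ω : ι → Ω, (∀ i, ω i ∈ Q i) → |∑ i, f (ω i)| ≤ s.card) ∧
    ∫ ω, (∑ i, f (ω i)) ^ 2 ∂(Measure.pi μ) ≤ s.card := by
  classical
  have hint : ∀ i, Integrable f (μ i) := fun i =>
    Integrable.of_mem_Icc a (a + 1) hf.aemeasurable (Eventually.of_forall hfa)
  have hmean : ∀ i, ∫ x, f x ∂(μ i) ∈ Icc a (a + 1) := by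
    intro i
    constructor
    · have := integral_mono (integrable_const a) (hint i) (fun x => (hfa x).1)
      simpa using this
    · have := integral_mono (hint i) (integrable_const (a + 1)) (fun x => (hfa x).2)
      simpa using this
  have hconst : ∀ i, i ∉ s → ∀ x ∈ Q i, f x = ∫ x, f x ∂(μ i) := by
    intro i hi x hx
    obtain ⟨v, hv⟩ := hs i hi
    have : ∫ x, f x ∂(μ i) = ∫ x, v ∂(μ i) := integral_congr_ae (by
      filter_upwards [hQ i] with y hy using hv y hy)
    rw [this, hv x hx]; simp
  constructor
  · intro ω hω
    have h1 : ∑ i, f (ω i) = ∑ i ∈ s, (f (ω i) - ∫ x, f x ∂(μ i)) := by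
      rw [← sub_zero (∑ i, f (ω i)), ← hsum, ← Finset.sum_sub_distrib]
      symm
      apply Finset.sum_subset (Finset.subset_univ s)
      intro i _ hi
      rw [hconst i hi _ (hω i), sub_self]
    rw [h1]
    refine (Finset.abs_sum_le_sum_abs _ _).trans ?_
    have : ∑ i ∈ s, |f (ω i) - ∫ x, f x ∂(μ i)| ≤ ∑ i ∈ s, (1 : ℝ) := by
      refine Finset.sum_le_sum fun i _ => ?_
      have h2 := hfa (ω i); have h3 := hmean i
      rw [abs_le]; constructor <;> linarith [h2.1, h2.2, h3.1, h3.2]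
    simpa using this
  · have hL2 : ∀ i, MemLp f 2 (μ i) := fun i =>
      memLp_of_bounded (Eventually.of_forall hfa) hf.aestronglyMeasurable 2
    have hv := ProbabilityTheory.variance_sum_pi (μ := μ) (X := fun _ => f) hL2
    have hE : ∫ ω, (∑ i, fun ω : ι → Ω => f (ω i)) ω ∂(Measure.pi μ) = 0 := by
      simp only [Finset.sum_apply]
      rw [integral_finsetSum]
      · rw [← hsum]
        exact Finset.sum_congr rfl fun i _ => integral_comp_eval hf.aestronglyMeasurable
      · intro i _
        exact integrable_comp_eval (hint i)
    rw [ProbabilityTheory.variance_of_integral_eq_zero (by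
      apply Measurable.aemeasurable
      have : (∑ i, fun ω : ι → Ω => f (ω i)) = fun ω => ∑ i, f (ω i) := by ext; simp
      rw [this]; fun_prop) hE] at hv
    have h4 : ∑ i, ProbabilityTheory.variance f (μ i) ≤ s.card := by
      have h5 : ∑ i, ProbabilityTheory.variance f (μ i) = ∑ i ∈ s, ProbabilityTheory.variance f (μ i) := by
        symm
        apply Finset.sum_subset (Finset.subset_univ s)
        intro i _ hi
        rw [ProbabilityTheory.variance_eq_integral hf.aemeasurable]
        rw [integral_eq_zero_of_ae]
        filter_upwards [hQ i] with x hx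
        rw [← hconst i hi x hx]; simp
      rw [h5]
      have : ∑ i ∈ s, ProbabilityTheory.variance f (μ i) ≤ ∑ i ∈ s, (1 : ℝ) := by
        refine Finset.sum_le_sum fun i _ => ?_
        refine (ProbabilityTheory.variance_le_sq_of_bounded (a := a) (b := a + 1)
          (Eventually.of_forall hfa) hf.aemeasurable).trans ?_
        norm_num
      simpa using this
    rw [← hv] at h4
    simpa [Finset.sum_apply] using h4

lemma lowerBox_sub {d : ℕ} {t : Fin d → ℝ} (ht : t ∈ Icc (0 : Fin d → ℝ) 1) :
    lowerBox t ⊆ Icc (0 : Fin d → ℝ) 1 := fun y hy =>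
  ⟨fun i => (hy i).1, fun i => (hy i).2.le.trans (ht.2 i)⟩

lemma lowerBox_meas {d : ℕ} (t : Fin d → ℝ) : MeasurableSet (lowerBox t) := by
  have : lowerBox t = Set.pi univ (fun i => Ico 0 (t i)) := by ext; simp [lowerBox]
  rw [this]; exact MeasurableSet.univ_pi fun i => measurableSet_Ico

lemma region_meas {d : ℕ} {ψ : (Fin d → ℝ) → ℝ} (hmeas : Measurable ψ) (L : ℝ) :
    MeasurableSet (graphRegion ψ L) := by
  refine (measurable_fst measurableSet_Icc).inter ((measurable_snd measurableSet_Icc).inter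
    (measurableSet_le (f := fun z : (Fin d → ℝ) × ℝ => L * z.2) (g := fun z => ψ z.1)
      (by fun_prop) (by fun_prop)))

lemma Jstar_meas {d : ℕ} {ψ : (Fin d → ℝ) → ℝ} (hmeas : Measurable ψ) (L : ℝ) (t : Fin d → ℝ) :
    MeasurableSet (Jstar ψ L t) :=
  ((lowerBox_meas t).prod measurableSet_Icc).inter (region_meas hmeas L)

lemma vol_gen {d : ℕ} {L : ℝ} (hL : 0 < L) {ψ : (Fin d → ℝ) → ℝ} (hmeas : Measurable ψ)
    (hψ0 : ∀ z ∈ Icc (0 : Fin d → ℝ) 1, 0 ≤ ψ z)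
    (hψL : ∀ z ∈ Icc (0 : Fin d → ℝ) 1, ψ z ≤ L) {U : Set (Fin d → ℝ)} (hU : MeasurableSet U)
    (hUs : U ⊆ Icc (0 : Fin d → ℝ) 1) :
    volume ((U ×ˢ Icc (0 : ℝ) 1) ∩ graphRegion ψ L) = ENNReal.ofReal ((∫ z in U, ψ z) / L) := by
  rw [Measure.volume_eq_prod, Measure.prod_apply ((hU.prod measurableSet_Icc).inter (region_meas hmeas L))]
  have h1 : ∀ x, volume (Prod.mk x ⁻¹' ((U ×ˢ Icc (0 : ℝ) 1) ∩ graphRegion ψ L)) =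
      U.indicator (fun x => ENNReal.ofReal (ψ x / L)) x := by
    intro x
    by_cases hx : x ∈ U
    · rw [indicator_of_mem hx]
      have hxI := hUs hx
      have : Prod.mk x ⁻¹' ((U ×ˢ Icc (0 : ℝ) 1) ∩ graphRegion ψ L) = Icc 0 (ψ x / L) := by
        ext y
        have hle : ψ x / L ≤ 1 := by rw [div_le_one hL]; exact hψL x hxI
        simp only [mem_preimage, mem_inter_iff, mem_prod, graphRegion, Set.mem_ofPred_eq]
        rw [Set.mem_Icc (b := ψ x / L), le_div_iff₀ hL, mul_comm y]
        constructor
        · rintro ⟨⟨_, h⟩, _, _, h'⟩; exact ⟨h.1, h'⟩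
        · rintro ⟨h, h'⟩
          have : y ≤ 1 := by
            refine le_trans ?_ hle
            rw [le_div_iff₀ hL, mul_comm]; exact h'
          exact ⟨⟨hx, h, this⟩, hxI, ⟨h, this⟩, h'⟩
      rw [this, Real.volume_Icc, sub_zero]
    · rw [indicator_of_notMem hx]
      have : Prod.mk x ⁻¹' ((U ×ˢ Icc (0 : ℝ) 1) ∩ graphRegion ψ L) = ∅ := by
        ext y; simp [hx]
      rw [this]; simp
  rw [lintegral_congr h1, lintegral_indicator hU, ← integral_div, ofReal_integral_eq_lintegral_ofReal]
  · have : IsFiniteMeasure ((volume : Measure (Fin d → ℝ)).restrict U) :=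
      ⟨by rw [Measure.restrict_apply_univ]; exact (measure_mono hUs).trans_lt isCompact_Icc.measure_lt_top⟩
    refine Integrable.of_mem_Icc 0 1 (hmeas.div_const L).aemeasurable ?_
    filter_upwards [ae_restrict_mem hU] with x hx
    exact ⟨div_nonneg (hψ0 x (hUs hx)) hL.le, by rw [div_le_one hL]; exact hψL x (hUs hx)⟩
  · filter_upwards [ae_restrict_mem hU] with x hx
    exact div_nonneg (hψ0 x (hUs hx)) hL.le

noncomputable def cubeMeas {d m : ℕ} (c : (Fin d → Fin m) × Fin m) : Measure ((Fin d → ℝ) × ℝ) :=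
  (volume (gridCubeP c))⁻¹ • volume.restrict (gridCubeP c)

lemma cubeMeas_prob {d m : ℕ} (hm : 0 < m) (c : (Fin d → Fin m) × Fin m) :
    IsProbabilityMeasure (cubeMeas c) := by
  have hm' : (0 : ℝ) < m := by exact_mod_cast hm
  constructor
  rw [cubeMeas, Measure.smul_apply, Measure.restrict_apply_univ, smul_eq_mul]
  apply ENNReal.inv_mul_cancel
  · rw [grid_vol]; simp; positivity
  · rw [grid_vol]; simp

lemma cubeMeas_mem {d m : ℕ} (c : (Fin d → Fin m) × Fin m) :
    ∀ᵐ x ∂(cubeMeas c), x ∈ gridCubeP c :=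
  Measure.ae_smul_measure (ae_restrict_mem (grid_meas c)) _

lemma sum_cubes {d m : ℕ} (hm : 0 < m) {S : Set ((Fin d → ℝ) × ℝ)} (hS : MeasurableSet S)
    (hS1 : S ⊆ Icc (0 : Fin d → ℝ) 1 ×ˢ Icc (0 : ℝ) 1) :
    ∑ c : (Fin d → Fin m) × Fin m, ∫ x, S.indicator (fun _ => (1 : ℝ)) x ∂(cubeMeas c) =
      (m : ℝ) ^ (d + 1) * (volume S).toReal := by
  have hm' : (0 : ℝ) < m := by exact_mod_cast hm
  have h1 : ∀ c : (Fin d → Fin m) × Fin m, ∫ x, S.indicator (fun _ => (1 : ℝ)) x ∂(cubeMeas c)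
      = (m : ℝ) ^ (d + 1) * (volume (S ∩ gridCubeP c)).toReal := by
    intro c
    rw [integral_indicator hS]
    simp only [integral_const, smul_eq_mul, mul_one, Measure.real, MeasurableSet.univ,
      Measure.restrict_apply, univ_inter]
    rw [cubeMeas, Measure.smul_apply, Measure.restrict_apply hS, smul_eq_mul, ENNReal.toReal_mul,
      grid_vol, ENNReal.toReal_inv, ENNReal.toReal_ofReal (by positivity)]
    simp
  rw [Finset.sum_congr rfl fun c _ => h1 c, ← Finset.mul_sum]
  congr 1
  have hfin : volume S < ⊤ := (measure_mono hS1).trans_lt (isCompact_Icc.prod isCompact_Icc).measure_lt_top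
  rw [← ENNReal.toReal_sum (fun c _ => ((measure_mono inter_subset_left).trans_lt hfin).ne)]
  congr 1
  rw [← measure_biUnion_finset]
  · apply measure_congr
    have hU : ∀ᵐ z ∂(volume : Measure ((Fin d → ℝ) × ℝ)), (∀ i, z.1 i ≠ 1) ∧ z.2 ≠ 1 := by
      rw [Measure.volume_eq_prod]
      refine Eventually.and ?_ ?_
      · rw [ae_all_iff]
        intro i
        have h2 : ∀ᵐ y ∂(volume : Measure (Fin d → ℝ)), y i ≠ 1 := by
          rw [ae_iff]
          have := Measure.pi_hyperplane (fun _ : Fin d => (volume : Measure ℝ)) i (1 : ℝ)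
          simpa [volume_pi] using this
        exact Measure.quasiMeasurePreserving_fst.ae h2
      · have h2 : ∀ᵐ y ∂(volume : Measure ℝ), y ≠ 1 := Measure.ae_ne _ _
        exact Measure.quasiMeasurePreserving_snd.ae h2
    filter_upwards [hU] with z hz
    apply propext
    change z ∈ (⋃ c ∈ Finset.univ, S ∩ gridCubeP c) ↔ z ∈ S
    simp only [mem_iUnion, Finset.mem_univ, exists_prop, true_and, mem_inter_iff]
    constructor
    · rintro ⟨c, h, _⟩; exact h
    · intro hzS
      obtain ⟨g1, g2⟩ := hS1 hzS
      have fl : ∀ x : ℝ, 0 ≤ x → x < 1 → ∃ n : Fin m, (n : ℝ) / m ≤ x ∧ x < ((n : ℝ) + 1) / m := by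
        intro x h0 h1
        have hlt : ⌊x * m⌋₊ < m := by
          rw [Nat.floor_lt (by positivity)]; nlinarith
        refine ⟨⟨⌊x * m⌋₊, hlt⟩, ?_, ?_⟩
        · rw [div_le_iff₀ hm']; exact Nat.floor_le (by positivity)
        · rw [lt_div_iff₀ hm']; exact Nat.lt_floor_add_one _
      choose n hn using fun i => fl (z.1 i) (g1.1 i) (lt_of_le_of_ne (g1.2 i) (hz.1 i))
      obtain ⟨n2, hn2⟩ := fl z.2 g2.1 (lt_of_le_of_ne g2.2 hz.2)
      exact ⟨(n, n2), hzS, hn, hn2⟩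
  · intro c _ c' _ hne
    rw [Function.onFun, Set.disjoint_left]
    intro z hz hz'
    exact hne (grid_disj hm hz.2 hz'.2)
  · exact fun c _ => hS.inter (grid_meas c)
lemma ind_range {d : ℕ} (ψ : (Fin d → ℝ) → ℝ) (L ρ : ℝ) (h0 : 0 ≤ ρ) (h1 : ρ ≤ 1) (t : Fin d → ℝ)
    (z : (Fin d → ℝ) × ℝ) :
    (Jstar ψ L t).indicator (fun _ => (1 : ℝ)) z
      - ρ * (graphRegion ψ L).indicator (fun _ => (1 : ℝ)) z ∈ Icc (-ρ) (-ρ + 1) := by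
  by_cases hA : z ∈ graphRegion ψ L
  · by_cases hJ : z ∈ Jstar ψ L t
    · simp only [hA, hJ, indicator_of_mem]; constructor <;> linarith
    · simp [hA, hJ]
  · have hJ : z ∉ Jstar ψ L t := fun h => hA h.2
    simp [hA, hJ, h0, h1]

lemma ind_const {d m : ℕ} (hm : 0 < m) (ψ : (Fin d → ℝ) → ℝ) (L ρ : ℝ) {t : Fin d → ℝ}
    (ht : t ∈ Icc (0 : Fin d → ℝ) 1) (c : (Fin d → Fin m) × Fin m)
    (hB : ¬ ((gridCubeP c ∩ graphRegion ψ L).Nonempty ∧ ¬ gridCubeP c ⊆ graphRegion ψ L))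
    (hW : ¬ (gridCubeP c ⊆ graphRegion ψ L ∧ (∀ j, (c.1 j : ℕ) ≤ ⌊t j * m⌋₊) ∧
        ∃ i, (c.1 i : ℕ) = ⌊t i * m⌋₊)) :
    ∃ v, ∀ z ∈ gridCubeP c, (Jstar ψ L t).indicator (fun _ => (1 : ℝ)) z
      - ρ * (graphRegion ψ L).indicator (fun _ => (1 : ℝ)) z = v := by
  have hm' : (0 : ℝ) < m := by exact_mod_cast hm
  by_cases hQ : gridCubeP c ⊆ graphRegion ψ L
  · by_cases hk : ∀ j, (c.1 j : ℕ) ≤ ⌊t j * m⌋₊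
    · have hlt : ∀ j, (c.1 j : ℕ) < ⌊t j * m⌋₊ := fun j =>
        lt_of_le_of_ne (hk j) fun he => hW ⟨hQ, hk, j, he⟩
      refine ⟨1 - ρ, fun z hz => ?_⟩
      have hJ : z ∈ Jstar ψ L t := by
        refine ⟨⟨fun j => ⟨(hQ hz).1.1 j, ?_⟩, (hQ hz).2.1⟩, hQ hz⟩
        refine (hz.1 j).2.trans_le ?_
        rw [div_le_iff₀ hm']
        have h1 : ((c.1 j : ℕ) : ℝ) + 1 ≤ (⌊t j * m⌋₊ : ℝ) := by exact_mod_cast hlt j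
        exact h1.trans (Nat.floor_le (mul_nonneg (ht.1 j) hm'.le))
      simp [hJ, hQ hz]
    · push Not at hk
      obtain ⟨j, hj⟩ := hk
      refine ⟨-ρ, fun z hz => ?_⟩
      have hJ : z ∉ Jstar ψ L t := by
        intro h
        have h1 := (h.1.1 j).2
        have h2 := (hz.1 j).1
        have h3 : t j * m < (c.1 j : ℕ) := (Nat.floor_lt (mul_nonneg (ht.1 j) hm'.le)).1 hj
        rw [div_le_iff₀ hm'] at h2
        nlinarith
      simp [hJ, hQ hz]
  · refine ⟨0, fun z hz => ?_⟩
    have hA : z ∉ graphRegion ψ L := fun h => hB ⟨⟨z, hz, h⟩, hQ⟩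
    have hJ : z ∉ Jstar ψ L t := fun h => hA h.2
    simp [hA, hJ]

lemma rho_meas {d : ℕ} {ψ : (Fin d → ℝ) → ℝ} (hmeas : Measurable ψ) :
    Measurable fun t : Fin d → ℝ => ∫ z in lowerBox t, ψ z := by
  have h1 : ∀ t : Fin d → ℝ, ∫ z in lowerBox t, ψ z = ∫ z, (lowerBox t).indicator ψ z := fun t =>
    (integral_indicator (lowerBox_meas t)).symm
  simp only [h1]
  have hset : MeasurableSet {p : (Fin d → ℝ) × (Fin d → ℝ) | p.2 ∈ lowerBox p.1} := by
    have : {p : (Fin d → ℝ) × (Fin d → ℝ) | p.2 ∈ lowerBox p.1} =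
        ⋂ i, ({p | 0 ≤ p.2 i} ∩ {p | p.2 i < p.1 i}) := by
      ext p; simp [lowerBox]
    rw [this]
    exact MeasurableSet.iInter fun i => (measurableSet_le (by fun_prop) (by fun_prop)).inter
      (measurableSet_lt (by fun_prop) (by fun_prop))
  have hm2 : Measurable (Function.uncurry fun (t z : Fin d → ℝ) => (lowerBox t).indicator ψ z) := by
    have : (Function.uncurry fun (t z : Fin d → ℝ) => (lowerBox t).indicator ψ z) =
      {p : (Fin d → ℝ) × (Fin d → ℝ) | p.2 ∈ lowerBox p.1}.indicator (fun p => ψ p.2) := by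
      ext p; simp only [Function.uncurry, Set.indicator]; rfl
    rw [this]
    exact (hmeas.comp measurable_snd).indicator hset
  exact hm2.stronglyMeasurable.integral_prod_right.measurable

lemma joint_meas {d m : ℕ} {ψ : (Fin d → ℝ) → ℝ} (hmeas : Measurable ψ) (L : ℝ)
    (c : (Fin d → Fin m) × Fin m) :
    Measurable fun p : (((Fin d → Fin m) × Fin m) → (Fin d → ℝ) × ℝ) × (Fin d → ℝ) =>
      (Jstar ψ L p.2).indicator (fun _ => (1 : ℝ)) (p.1 c) := by
  have hset : MeasurableSet {p : (((Fin d → Fin m) × Fin m) → (Fin d → ℝ) × ℝ) × (Fin d → ℝ) |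
      p.1 c ∈ Jstar ψ L p.2} := by
    have : {p : (((Fin d → Fin m) × Fin m) → (Fin d → ℝ) × ℝ) × (Fin d → ℝ) |
      p.1 c ∈ Jstar ψ L p.2} = (⋂ i, ({p | 0 ≤ (p.1 c).1 i} ∩ {p | (p.1 c).1 i < p.2 i})) ∩
        ((fun p => p.1 c) ⁻¹' graphRegion ψ L) := by
      ext p
      simp only [Jstar, lowerBox, Set.mem_ofPred_eq, mem_inter_iff, mem_prod, mem_iInter, mem_preimage]
      constructor
      · rintro ⟨⟨h1, h2⟩, h3⟩; exact ⟨h1, h3⟩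
      · rintro ⟨h1, h3⟩; exact ⟨⟨h1, h3.2.1⟩, h3⟩
    rw [this]
    refine MeasurableSet.inter (MeasurableSet.iInter fun i =>
      (measurableSet_le (by fun_prop) (by fun_prop)).inter
      (measurableSet_lt (by fun_prop) (by fun_prop))) ?_
    have : Measurable (fun p : (((Fin d → Fin m) × Fin m) → (Fin d → ℝ) × ℝ) × (Fin d → ℝ) => p.1 c) := by
      fun_prop
    exact this (region_meas hmeas L)
  exact (measurable_const (a := (1 : ℝ))).indicator hset

lemma per_t {d : ℕ} {L : ℝ} (hL : 0 < L) {ψ : (Fin d → ℝ) → ℝ} (hmeas : Measurable ψ)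
    (hψ0 : ∀ z ∈ Icc (0 : Fin d → ℝ) 1, 0 ≤ ψ z)
    (hψL : ∀ z ∈ Icc (0 : Fin d → ℝ) 1, ψ z ≤ L)
    {C : ℝ} (hC : C = ∫ z in Icc (0 : Fin d → ℝ) 1, ψ z) (hCpos : 0 < C)
    {m : ℕ} (hm : 0 < m) (K : ℝ)
    (hK : ∀ (k : Fin d → ℕ)
      (B W : Finset ((Fin d → Fin m) × Fin m)),
      (∀ c ∈ B, (gridCubeP c ∩ graphRegion ψ L).Nonempty ∧ ¬ gridCubeP c ⊆ graphRegion ψ L) →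
      (∀ c ∈ W, gridCubeP c ⊆ graphRegion ψ L ∧ (∀ j, (c.1 j : ℕ) ≤ k j) ∧
        ∃ i, (c.1 i : ℕ) = k i) → (B.card : ℝ) + W.card ≤ K)
    {t : Fin d → ℝ} (ht : t ∈ Icc (0 : Fin d → ℝ) 1) (ρ : ℝ)
    (hρ : ρ = (1 / C) * ∫ z in lowerBox t, ψ z) :
    (0 ≤ ρ ∧ ρ ≤ 1) ∧
    (∀ ω : ((Fin d → Fin m) × Fin m) → (Fin d → ℝ) × ℝ, (∀ c, ω c ∈ gridCubeP c) →
      |∑ c, ((Jstar ψ L t).indicator (fun _ => (1 : ℝ)) (ω c)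
      - ρ * (graphRegion ψ L).indicator (fun _ => (1 : ℝ)) (ω c))| ≤ K) ∧
    ∫ ω, (∑ c, ((Jstar ψ L t).indicator (fun _ => (1 : ℝ)) (ω c)
      - ρ * (graphRegion ψ L).indicator (fun _ => (1 : ℝ)) (ω c))) ^ 2 ∂(stratifiedMeasure d m) ≤ K := by
  classical
  have hpr := fun c : (Fin d → Fin m) × Fin m => cubeMeas_prob hm c
  have hsub := lowerBox_sub ht
  have hI0 : 0 ≤ ∫ z in lowerBox t, ψ z :=
    setIntegral_nonneg (lowerBox_meas t) fun z hz => hψ0 z (hsub hz)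
  have hint : IntegrableOn ψ (Icc (0 : Fin d → ℝ) 1) := by
    have : IsFiniteMeasure ((volume : Measure (Fin d → ℝ)).restrict (Icc 0 1)) :=
      ⟨by rw [Measure.restrict_apply_univ]; exact isCompact_Icc.measure_lt_top⟩
    refine Integrable.of_mem_Icc 0 L hmeas.aemeasurable ?_
    filter_upwards [ae_restrict_mem measurableSet_Icc] with x hx
    exact ⟨hψ0 x hx, hψL x hx⟩
  have hI1 : ∫ z in lowerBox t, ψ z ≤ C := by
    rw [hC]
    refine setIntegral_mono_set hint ?_ hsub.eventuallyLE
    filter_upwards [ae_restrict_mem measurableSet_Icc] with x hx using hψ0 x hx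
  have h01 : 0 ≤ ρ ∧ ρ ≤ 1 := by
    rw [hρ]; constructor
    · positivity
    · rw [one_div, inv_mul_le_iff₀ hCpos]; linarith
  refine ⟨h01, ?_⟩
  set s : Finset ((Fin d → Fin m) × Fin m) := Finset.univ.filter fun c =>
    (gridCubeP c ∩ graphRegion ψ L).Nonempty ∧ ¬ gridCubeP c ⊆ graphRegion ψ L with hs
  set w : Finset ((Fin d → Fin m) × Fin m) := Finset.univ.filter fun c =>
    gridCubeP c ⊆ graphRegion ψ L ∧ (∀ j, (c.1 j : ℕ) ≤ ⌊t j * m⌋₊) ∧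
        ∃ i, (c.1 i : ℕ) = ⌊t i * m⌋₊ with hw
  have hcard : ((s ∪ w).card : ℝ) ≤ K := by
    refine le_trans ?_ (hK (fun j => ⌊t j * m⌋₊) s w (fun c hc => (Finset.mem_filter.1 hc).2)
      (fun c hc => (Finset.mem_filter.1 hc).2))
    exact_mod_cast Finset.card_union_le s w
  have hmJ := Jstar_meas hmeas L t
  have hmA := region_meas hmeas L
  have hJi : ∀ c : (Fin d → Fin m) × Fin m,
      Integrable ((Jstar ψ L t).indicator (fun _ => (1 : ℝ))) (cubeMeas c) := fun c =>
    (integrable_const (1 : ℝ)).indicator hmJ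
  have hAi : ∀ c : (Fin d → Fin m) × Fin m,
      Integrable ((graphRegion ψ L).indicator (fun _ => (1 : ℝ))) (cubeMeas c) := fun c =>
    (integrable_const (1 : ℝ)).indicator hmA
  have hA1 : graphRegion ψ L ⊆ Icc (0 : Fin d → ℝ) 1 ×ˢ Icc (0 : ℝ) 1 := fun z hz => ⟨hz.1, hz.2.1⟩
  have hvolA : (volume (graphRegion ψ L)).toReal = C / L := by
    have := vol_gen hL hmeas hψ0 hψL measurableSet_Icc (le_refl _)
    rw [inter_eq_right.2 hA1, ← hC] at this
    rw [this, ENNReal.toReal_ofReal (by positivity)]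
  have hvolJ : (volume (Jstar ψ L t)).toReal = (∫ z in lowerBox t, ψ z) / L := by
    rw [Jstar, vol_gen hL hmeas hψ0 hψL (lowerBox_meas t) hsub, ENNReal.toReal_ofReal (by positivity)]
  have hsum : ∑ c : (Fin d → Fin m) × Fin m, ∫ z, ((Jstar ψ L t).indicator (fun _ => (1 : ℝ)) z
      - ρ * (graphRegion ψ L).indicator (fun _ => (1 : ℝ)) z) ∂(cubeMeas c) = 0 := by
    have : ∀ c : (Fin d → Fin m) × Fin m, ∫ z, ((Jstar ψ L t).indicator (fun _ => (1 : ℝ)) z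
      - ρ * (graphRegion ψ L).indicator (fun _ => (1 : ℝ)) z) ∂(cubeMeas c) =
      ∫ z, (Jstar ψ L t).indicator (fun _ => (1 : ℝ)) z ∂(cubeMeas c)
      - ρ * ∫ z, (graphRegion ψ L).indicator (fun _ => (1 : ℝ)) z ∂(cubeMeas c) := fun c => by
      rw [integral_sub (hJi c) ((hAi c).const_mul ρ), integral_const_mul]
    rw [Finset.sum_congr rfl fun c _ => this c, Finset.sum_sub_distrib, ← Finset.mul_sum,
      sum_cubes hm hmJ (fun z hz => hA1 hz.2), sum_cubes hm hmA hA1, hvolA, hvolJ, hρ]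
    field_simp
    simp
  obtain ⟨g1, g2⟩ := prob_core (fun c : (Fin d → Fin m) × Fin m => cubeMeas c) gridCubeP cubeMeas_mem
    (fun z => (Jstar ψ L t).indicator (fun _ => (1 : ℝ)) z
      - ρ * (graphRegion ψ L).indicator (fun _ => (1 : ℝ)) z)
    ((measurable_const.indicator hmJ).sub ((measurable_const.indicator hmA).const_mul ρ)) (-ρ)
    (ind_range ψ L ρ h01.1 h01.2 t) hsum (s ∪ w) (by
      intro c hc
      rw [Finset.mem_union, not_or] at hc
      refine ind_const hm ψ L ρ ht c (fun h => hc.1 ?_) (fun h => hc.2 ?_)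
      · exact Finset.mem_filter.2 ⟨Finset.mem_univ _, h⟩
      · exact Finset.mem_filter.2 ⟨Finset.mem_univ _, h⟩)
  exact ⟨fun ω hω => (g1 ω hω).trans hcard, g2.trans hcard⟩

lemma rpow_bd {x K q : ℝ} (h : |x| ≤ K) (hq : 2 ≤ q) : |x| ^ q ≤ K ^ (q - 2) * x ^ 2 := by
  have h1 : |x| ^ q = |x| ^ (q - 2) * |x| ^ (2 : ℝ) := by
    rw [← Real.rpow_add_of_nonneg (abs_nonneg x) (by linarith) (by norm_num)]; congr 1; ring
  rw [h1, Real.rpow_two, sq_abs]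
  exact mul_le_mul_of_nonneg_right (Real.rpow_le_rpow (abs_nonneg x) h (by linarith)) (sq_nonneg x)

lemma card_eq {d m : ℕ} (A : Set ((Fin d → ℝ) × ℝ))
    (ω : ((Fin d → Fin m) × Fin m) → (Fin d → ℝ) × ℝ) :
    (Nat.card {c : (Fin d → Fin m) × Fin m // ω c ∈ A} : ℝ) =
      ∑ c, A.indicator (fun _ => (1 : ℝ)) (ω c) := by
  classical
  rw [Nat.card_eq_fintype_card, Fintype.card_subtype, Finset.card_filter]
  push_cast
  exact Finset.sum_congr rfl fun c _ => by simp [Set.indicator]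

end helpers

/-- **Moment bound for the weighted `L_q` discrepancy of the stratified
acceptance-rejection sampler** (Theorem 2 of the paper, with `s = d+1`): for every real
`2 ≤ q < ∞` and all large `m`,
`(E[N^q L_{q,N,ψ}^q])^{1/q} ≤ (3 √s M_A m^{s-1})^{1-1/q}`, where `N(ω) = #{c : ω_c ∈ A}`
and `∑_c 1_{J_t*}(ω_c) = ∑_n 1_{[0,t)}(y_n)` counts the projected accepted points. -/
theorem expected_Lq_discrepancy_stratified (d : ℕ) (hd : 1 ≤ d)
    (L : ℝ) (hL : 0 < L) (ψ : (Fin d → ℝ) → ℝ) (hmeas : Measurable ψ)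
    (hψ0 : ∀ z ∈ Icc (0 : Fin d → ℝ) 1, 0 ≤ ψ z)
    (hψL : ∀ z ∈ Icc (0 : Fin d → ℝ) 1, ψ z ≤ L)
    (C : ℝ) (hC : C = ∫ z in Icc (0 : Fin d → ℝ) 1, ψ z) (hCpos : 0 < C)
    (MA : ℝ) (hMApos : 0 < MA) (hMink : HasMinkowskiContentP (graphRegion ψ L) MA) :
    ∃ m₀ : ℕ, ∀ m : ℕ, m₀ ≤ m → ∀ q : ℝ, 2 ≤ q →
      (∫ ω, ((Nat.card {c : (Fin d → Fin m) × Fin m // ω c ∈ graphRegion ψ L} : ℝ) ^ q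
            * ∫ t in Icc (0 : Fin d → ℝ) 1,
                |(1 / (Nat.card {c : (Fin d → Fin m) × Fin m // ω c ∈ graphRegion ψ L} : ℝ))
                    * (∑ c, (Jstar ψ L t).indicator (fun _ => (1 : ℝ)) (ω c))
                  - (1 / C) * ∫ z in lowerBox t, ψ z| ^ q)
          ∂(stratifiedMeasure d m)) ^ (1 / q)
        ≤ (3 * Real.sqrt (d + 1) * MA * (m : ℝ) ^ d) ^ (1 - 1 / q) := by
  obtain ⟨m₀, hm₀⟩ := count ψ L hψ0 MA hMink
  refine ⟨m₀, fun m hmm q hq => ?_⟩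
  obtain ⟨hm, hcount⟩ := hm₀ m hmm
  set K := 3 * Real.sqrt (d + 1) * MA * (m : ℝ) ^ d with hKdef
  have hm' : (0 : ℝ) < m := by exact_mod_cast hm
  have hK0 : 0 < K := by positivity
  set ρ : (Fin d → ℝ) → ℝ := fun t => (1 / C) * ∫ z in lowerBox t, ψ z with hρ
  set Δ : (((Fin d → Fin m) × Fin m) → (Fin d → ℝ) × ℝ) → (Fin d → ℝ) → ℝ := fun ω t =>
    ∑ c, ((Jstar ψ L t).indicator (fun _ => (1 : ℝ)) (ω c)
      - ρ t * (graphRegion ψ L).indicator (fun _ => (1 : ℝ)) (ω c)) with hΔ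
  have hper := fun (t : Fin d → ℝ) (ht : t ∈ Icc (0 : Fin d → ℝ) 1) =>
    per_t hL hmeas hψ0 hψL hC hCpos hm K hcount ht (ρ t) rfl
  have hpr := fun c : (Fin d → Fin m) × Fin m => cubeMeas_prob hm c
  have hP : IsProbabilityMeasure (stratifiedMeasure d m) := by
    have : IsProbabilityMeasure (Measure.pi fun c : (Fin d → Fin m) × Fin m => cubeMeas c) :=
      inferInstance
    exact this
  have hmem : ∀ᵐ ω ∂(stratifiedMeasure d m), ∀ c, ω c ∈ gridCubeP c := by
    rw [ae_all_iff]
    intro c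
    exact (measurePreserving_eval (fun c : (Fin d → Fin m) × Fin m => cubeMeas c) c).quasiMeasurePreserving.ae
      (cubeMeas_mem c)
  set ν := (volume : Measure (Fin d → ℝ)).restrict (Icc 0 1) with hν
  have hν1 : ν univ = 1 := by
    rw [hν, Measure.restrict_apply_univ, Real.volume_Icc_pi]; simp
  have hνp : IsProbabilityMeasure ν := ⟨hν1⟩
  have hνm : ∀ᵐ t ∂ν, t ∈ Icc (0 : Fin d → ℝ) 1 := ae_restrict_mem measurableSet_Icc
  have hΔm : Measurable (Function.uncurry Δ) := by
    have hρm : Measurable ρ := (rho_meas hmeas).const_mul _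
    refine Finset.measurable_sum _ fun c _ => ?_
    refine (joint_meas hmeas L c).sub ((hρm.comp measurable_snd).mul ?_)
    have h1 : Measurable ((graphRegion ψ L).indicator (fun _ => (1 : ℝ))) :=
      measurable_const.indicator (region_meas hmeas L)
    exact h1.comp ((measurable_pi_apply c).comp measurable_fst)
  set n : ℝ := (Fintype.card ((Fin d → Fin m) × Fin m) : ℝ) with hn
  have hΔb : ∀ t ∈ Icc (0 : Fin d → ℝ) 1, ∀ ω, (Δ ω t) ^ 2 ∈ Icc 0 (n ^ 2) := by
    intro t ht ω
    refine ⟨sq_nonneg _, ?_⟩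
    rw [← sq_abs]
    refine pow_le_pow_left₀ (abs_nonneg _) ?_ 2
    refine (Finset.abs_sum_le_sum_abs _ _).trans ?_
    have h01 := (hper t ht).1
    have : ∀ c ∈ (Finset.univ : Finset ((Fin d → Fin m) × Fin m)),
        |(Jstar ψ L t).indicator (fun _ => (1 : ℝ)) (ω c)
      - ρ t * (graphRegion ψ L).indicator (fun _ => (1 : ℝ)) (ω c)| ≤ 1 := by
      intro c _
      have := ind_range ψ L (ρ t) h01.1 h01.2 t (ω c)
      rw [abs_le]; constructor <;> linarith [this.1, this.2]
    refine (Finset.sum_le_sum this).trans ?_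
    simp [hn]
  have hInt : Integrable (Function.uncurry fun ω t => K ^ (q - 2) * (Δ ω t) ^ 2)
      ((stratifiedMeasure d m).prod ν) := by
    refine Integrable.const_mul (f := fun p : _ × _ => (Δ p.1 p.2) ^ 2) ?_ _
    refine Integrable.of_mem_Icc 0 (n ^ 2) (hΔm.pow_const 2).aemeasurable ?_
    filter_upwards [Measure.quasiMeasurePreserving_snd.ae hνm] with p hp
    exact hΔb p.2 hp p.1
  have hIntω : ∀ ω, Integrable (fun t => K ^ (q - 2) * (Δ ω t) ^ 2) ν := by
    intro ω
    refine Integrable.const_mul ?_ _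
    refine Integrable.of_mem_Icc 0 (n ^ 2)
      ((hΔm.comp (measurable_const.prodMk measurable_id)).pow_const 2).aemeasurable ?_
    filter_upwards [hνm] with t ht
    exact hΔb t ht ω
  have hmain : (∫ ω, ((Nat.card {c : (Fin d → Fin m) × Fin m // ω c ∈ graphRegion ψ L} : ℝ) ^ q
            * ∫ t in Icc (0 : Fin d → ℝ) 1,
                |(1 / (Nat.card {c : (Fin d → Fin m) × Fin m // ω c ∈ graphRegion ψ L} : ℝ))
                    * (∑ c, (Jstar ψ L t).indicator (fun _ => (1 : ℝ)) (ω c))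
                  - (1 / C) * ∫ z in lowerBox t, ψ z| ^ q)
          ∂(stratifiedMeasure d m)) ≤ K ^ (q - 1) := by
    calc _ ≤ ∫ ω, ∫ t, K ^ (q - 2) * (Δ ω t) ^ 2 ∂ν ∂(stratifiedMeasure d m) := by
          refine integral_mono_of_nonneg ?_ hInt.integral_prod_left ?_
          · refine Eventually.of_forall fun ω => ?_
            exact mul_nonneg (Real.rpow_nonneg (Nat.cast_nonneg _) _)
              (integral_nonneg fun t => Real.rpow_nonneg (abs_nonneg _) _)
          · filter_upwards [hmem] with ω hω
            rw [← integral_const_mul]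
            refine integral_mono_of_nonneg ?_ (hIntω ω) ?_
            · exact Eventually.of_forall fun t => mul_nonneg (Real.rpow_nonneg (Nat.cast_nonneg _) _)
                (Real.rpow_nonneg (abs_nonneg _) _)
            · filter_upwards [hνm] with t ht
              have hb := (hper t ht).2.1 ω hω
              refine le_trans ?_ (rpow_bd (x := Δ ω t) hb hq)
              have hN := card_eq (graphRegion ψ L) ω
              set N := (Nat.card {c : (Fin d → Fin m) × Fin m // ω c ∈ graphRegion ψ L} : ℝ) with hNdef
              have hN0 : 0 ≤ N := Nat.cast_nonneg _
              have hΔN : Δ ω t = (∑ c, (Jstar ψ L t).indicator (fun _ => (1 : ℝ)) (ω c)) - ρ t * N := by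
                simp only [hΔ]
                rw [hN, Finset.sum_sub_distrib, Finset.mul_sum]
              rcases hN0.eq_or_lt with h0 | h0
              · rw [← h0, Real.zero_rpow (by linarith), zero_mul]
                exact Real.rpow_nonneg (abs_nonneg _) _
              · rw [← Real.mul_rpow hN0 (abs_nonneg _), ← abs_of_pos h0, ← abs_mul,
                  abs_of_pos h0, hΔN]
                refine le_of_eq ?_
                congr 2
                simp only [hρ]
                field_simp
      _ = ∫ t, ∫ ω, K ^ (q - 2) * (Δ ω t) ^ 2 ∂(stratifiedMeasure d m) ∂ν :=
          integral_integral_swap hInt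
      _ ≤ ∫ t, K ^ (q - 2) * K ∂ν := by
          refine integral_mono_ae hInt.integral_prod_right (integrable_const _) ?_
          filter_upwards [hνm] with t ht
          rw [integral_const_mul]
          exact mul_le_mul_of_nonneg_left (hper t ht).2.2 (Real.rpow_nonneg hK0.le _)
      _ = K ^ (q - 1) := by
          simp only [integral_const, Measure.real, hν1, ENNReal.toReal_one, one_smul]
          rw [← Real.rpow_add_one hK0.ne']; congr 1; ring
  refine (Real.rpow_le_rpow ?_ hmain (by positivity)).trans (le_of_eq ?_)
  · refine integral_nonneg fun ω => ?_
    exact mul_nonneg (Real.rpow_nonneg (Nat.cast_nonneg _) _)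
      (integral_nonneg fun t => Real.rpow_nonneg (abs_nonneg _) _)
  · rw [← Real.rpow_mul hK0.le]; congr 1
    have : q ≠ 0 := by linarith
    field_simp
end

section
/- Let s ≥ 2, b ≥ 2, ψ : [0,1]^{s-1} → [0,1] measurable, A = {z ∈ [0,1]^s : ψ(z_1,…,z_{s-1}) ≥ z_s}, and suppose ∂A admits an (s−1)-dimensional Minkowski content M_A ∈ (0,∞). Then there exists a constant c > 0, depending only on s, b and ψ, such that the covering number satisfies Γ_k(ψ) ≤ c · b^{(1−1/s)k} for all k ∈ ℕ, where Γ_k(ψ) is the supremum over t ∈ [0,1]^{s-1} of the minimal number of pairwise disjoint b-adic elementary intervals of order k needed to cover ∂J_t* \ ∂[0,1]^s, with J_t* = ([0,t) × [0,1]) ∩ A. -/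
open MeasureTheory Set Filter

/-- The region `A = {z ∈ [0,1]^s : ψ(z_1,…,z_{s-1}) ≥ z_s}` (with `s = d+1`). -/
def graphRegion₁ {d : ℕ} (ψ : (Fin d → ℝ) → ℝ) : Set ((Fin d → ℝ) × ℝ) :=
  {z | z.1 ∈ Icc (0 : Fin d → ℝ) 1 ∧ z.2 ∈ Icc (0 : ℝ) 1 ∧ z.2 ≤ ψ z.1}

/-- The test set `J_t* = ([0,t) × [0,1]) ∩ A`. -/
def Jstar₁ {d : ℕ} (ψ : (Fin d → ℝ) → ℝ) (t : Fin d → ℝ) : Set ((Fin d → ℝ) × ℝ) :=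
  (lowerBox t ×ˢ Icc (0 : ℝ) 1) ∩ graphRegion₁ ψ

/-- The closed unit cube `[0,1]^{d+1}`. -/
def unitCubeP (d : ℕ) : Set ((Fin d → ℝ) × ℝ) :=
  (Icc (0 : Fin d → ℝ) 1) ×ˢ (Icc (0 : ℝ) 1)

/-- A `(d+1)`-dimensional `b`-adic elementary interval of order `k`. -/
def IsElemIntervalP {d : ℕ} (b k : ℕ) (E : Set ((Fin d → ℝ) × ℝ)) : Prop :=
  ∃ (ev : Fin d → ℕ) (el : ℕ) (a : Fin d → ℕ) (al : ℕ),
    (∀ i, a i < b ^ ev i) ∧ al < b ^ el ∧ (∑ i, ev i) + el = k ∧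
    E = {z | (∀ i, (a i : ℝ) / b ^ ev i ≤ z.1 i ∧ z.1 i < ((a i : ℝ) + 1) / b ^ ev i) ∧
             ((al : ℝ) / b ^ el ≤ z.2 ∧ z.2 < ((al : ℝ) + 1) / b ^ el)}

abbrev CellIdx (d n m : ℕ) : Type := (Fin d → Fin n) × Fin m

def gridCell {d n m : ℕ} (p : CellIdx d n m) : Set ((Fin d → ℝ) × ℝ) :=
  {z | (∀ i, ((p.1 i : ℕ) : ℝ) / n ≤ z.1 i ∧ z.1 i < (((p.1 i : ℕ) : ℝ) + 1) / n) ∧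
             (((p.2 : ℕ) : ℝ) / m ≤ z.2 ∧ z.2 < (((p.2 : ℕ) : ℝ) + 1) / m)}

lemma idx_eq_floor {n a : ℕ} (hn : 0 < n) {x : ℝ} (h1 : (a : ℝ) / n ≤ x)
    (h2 : x < ((a : ℝ) + 1) / n) : a = ⌊x * n⌋₊ := by
  have hn' : (0 : ℝ) < n := by exact_mod_cast hn
  rw [div_le_iff₀ hn'] at h1
  rw [lt_div_iff₀ hn'] at h2
  symm
  rw [Nat.floor_eq_iff (le_trans (by positivity) h1)]
  exact ⟨h1, h2⟩

lemma gridCell_disjoint {d n m : ℕ} (hn : 0 < n) (hm : 0 < m) {p p' : CellIdx d n m}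
    (h : p ≠ p') : Disjoint (gridCell p) (gridCell p') := by
  rw [Set.disjoint_left]
  intro z hz hz'
  apply h
  refine Prod.ext (funext fun i => Fin.ext ?_) (Fin.ext ?_)
  · rw [idx_eq_floor hn (hz.1 i).1 (hz.1 i).2, ← idx_eq_floor hn (hz'.1 i).1 (hz'.1 i).2]
  · rw [idx_eq_floor hm hz.2.1 hz.2.2, ← idx_eq_floor hm hz'.2.1 hz'.2.2]

lemma floor_idx {n : ℕ} (hn : 0 < n) {x : ℝ} (h0 : 0 ≤ x) (h1 : x < 1) :
    ∃ a : Fin n, ((a : ℕ) : ℝ) / n ≤ x ∧ x < (((a : ℕ) : ℝ) + 1) / n := by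
  have hn' : (0 : ℝ) < n := by exact_mod_cast hn
  refine ⟨⟨⌊x * n⌋₊, ?_⟩, ?_, ?_⟩
  · rw [Nat.floor_lt (by positivity)]; nlinarith
  · rw [div_le_iff₀ hn']; exact Nat.floor_le (by positivity)
  · rw [lt_div_iff₀ hn']; exact Nat.lt_floor_add_one _

lemma exists_gridCell {d n m : ℕ} (hn : 0 < n) (hm : 0 < m) {z : (Fin d → ℝ) × ℝ}
    (h1 : ∀ i, 0 ≤ z.1 i ∧ z.1 i < 1) (h2 : 0 ≤ z.2 ∧ z.2 < 1) :
    ∃ p : CellIdx d n m, z ∈ gridCell p := by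
  choose a ha using fun i => floor_idx hn (h1 i).1 (h1 i).2
  obtain ⟨c, hc⟩ := floor_idx hm h2.1 h2.2
  exact ⟨(a, c), ha, hc⟩

lemma gridCell_eq {d n m : ℕ} (p : CellIdx d n m) : gridCell p =
    (Set.pi univ fun i => Ico (((p.1 i : ℕ) : ℝ) / n) ((((p.1 i : ℕ) : ℝ) + 1) / n)) ×ˢ
      Ico (((p.2 : ℕ) : ℝ) / m) ((((p.2 : ℕ) : ℝ) + 1) / m) := by
  ext z; simp [gridCell]

lemma gridCell_meas {d n m : ℕ} (p : CellIdx d n m) : MeasurableSet (gridCell p) := by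
  rw [gridCell_eq]
  exact (MeasurableSet.univ_pi fun i => measurableSet_Ico).prod measurableSet_Ico

lemma gridCell_volume {d n m : ℕ} (p : CellIdx d n m) :
    volume (gridCell p) = ENNReal.ofReal ((1 / n) ^ d * (1 / m)) := by
  rw [gridCell_eq, Measure.volume_eq_prod, Measure.prod_prod, Real.volume_pi_Ico, Real.volume_Ico]
  rw [ENNReal.ofReal_mul (by positivity), ENNReal.ofReal_pow (by positivity)]
  congr 1
  · rw [Finset.prod_congr rfl (g := fun _ => ENNReal.ofReal (1 / n))]
    · simp
    · intro i _; congr 1; ring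
  · congr 1; ring

lemma euclNbhdP_finite {d : ℕ} {F : Set ((Fin d → ℝ) × ℝ)} (hF : F ⊆ unitCubeP d) {ε : ℝ} :
    volume (euclNbhdP F ε) ≠ ⊤ := by
  have : euclNbhdP F ε ⊆ Icc (fun _ => -ε, -ε) (fun _ => 1 + ε, 1 + ε) := by
    rintro x ⟨y, hy, hxy⟩
    have hy' := hF hy
    obtain ⟨⟨h1, h2⟩, h3, h4⟩ := hy'
    have hε : 0 ≤ ε := (Real.sqrt_nonneg _).trans hxy
    rw [Real.sqrt_le_left hε] at hxy
    have hs : 0 ≤ ∑ i, (x.1 i - y.1 i) ^ 2 := Finset.sum_nonneg fun i _ => sq_nonneg _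
    have ha : |x.2 - y.2| ≤ ε := abs_le_of_sq_le_sq (by nlinarith) hε
    have hb : ∀ i, |x.1 i - y.1 i| ≤ ε := fun i => by
      have := Finset.single_le_sum (f := fun i => (x.1 i - y.1 i) ^ 2)
        (fun i _ => sq_nonneg _) (Finset.mem_univ i)
      exact abs_le_of_sq_le_sq (by nlinarith [sq_nonneg (x.2 - y.2)]) hε
    rw [abs_le] at ha
    refine ⟨⟨fun i => ?_, ?_⟩, ⟨fun i => ?_, ?_⟩⟩
    · have := abs_le.1 (hb i); have := h1 i; simp at this ⊢; linarith
    · simp; linarith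
    · have := abs_le.1 (hb i); have := h2 i; simp at this ⊢; linarith
    · simp; linarith
  exact ((measure_mono this).trans_lt isCompact_Icc.measure_lt_top).ne

lemma gridCell_sub_nbhd {d n m : ℕ} (hn : 0 < n) (hnm : n ≤ m) (p : CellIdx d n m)
    {F : Set ((Fin d → ℝ) × ℝ)} (h : (gridCell p ∩ F).Nonempty) :
    gridCell p ⊆ euclNbhdP F ((d + 1) / n) := by
  intro x hx
  obtain ⟨y, hy, hyF⟩ := h
  refine ⟨y, hyF, ?_⟩
  have hn' : (0 : ℝ) < n := by exact_mod_cast hn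
  have hnm' : (n : ℝ) ≤ m := by exact_mod_cast hnm
  have hm' : (1 : ℝ) / m ≤ 1 / n := one_div_le_one_div_of_le hn' hnm'
  rw [Real.sqrt_le_left (by positivity)]
  have key : ∀ (a : ℝ) (N : ℝ) (x y : ℝ), 1 / N ≤ 1 / (n : ℝ) → a / N ≤ x → x < (a + 1) / N →
      a / N ≤ y → y < (a + 1) / N → (x - y) ^ 2 ≤ (1 / (n : ℝ)) ^ 2 := by
    intro a N x y hN h1 h2 h3 h4
    rw [add_div] at h2 h4
    apply sq_le_sq'  <;> linarith
  have h1 : ∑ i, (x.1 i - y.1 i) ^ 2 ≤ ∑ i : Fin d, (1 / (n : ℝ)) ^ 2 :=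
    Finset.sum_le_sum fun i _ => key _ _ _ _ le_rfl (hx.1 i).1 (hx.1 i).2 (hy.1 i).1 (hy.1 i).2
  have h2 := key _ _ _ _ hm' hx.2.1 hx.2.2 hy.2.1 hy.2.2
  simp only [Finset.sum_const, Finset.card_univ, Fintype.card_fin, nsmul_eq_mul] at h1
  have : ((d + 1 : ℝ) / n) ^ 2 = (d + 1) ^ 2 * (1 / (n : ℝ)) ^ 2 := by ring
  rw [this]
  have hd : (0 : ℝ) ≤ d := by positivity
  have := mul_le_mul_of_nonneg_right (show (d + 1 : ℝ) ≤ (d + 1) ^ 2 by nlinarith)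
    (sq_nonneg (1 / (n : ℝ)))
  linarith

lemma count_volume {d n m : ℕ} (hn : 0 < n) (hnm : n ≤ m)
    {F : Set ((Fin d → ℝ) × ℝ)} (hF : F ⊆ unitCubeP d) (S : Finset (CellIdx d n m))
    (hS : ∀ p ∈ S, (gridCell p ∩ F).Nonempty) :
    (S.card : ℝ) * ((1 / n) ^ d * (1 / m)) ≤ (volume (euclNbhdP F ((d + 1) / n))).toReal := by
  have h1 : volume (⋃ p ∈ S, gridCell p) ≤ volume (euclNbhdP F ((d + 1) / n)) :=
    measure_mono (iUnion₂_subset fun p hp => gridCell_sub_nbhd hn hnm p (hS p hp))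
  rw [measure_biUnion_finset
    (fun p _ p' _ h => gridCell_disjoint hn (hn.trans_le hnm) h) (fun p _ => gridCell_meas p)] at h1
  simp only [gridCell_volume, Finset.sum_const, nsmul_eq_mul] at h1
  have h2 := ENNReal.toReal_mono (euclNbhdP_finite hF) h1
  rw [ENNReal.toReal_mul, ENNReal.toReal_ofReal (by positivity)] at h2
  simpa using h2

lemma count_slice {d n m : ℕ} (i : Fin d) (x : ℝ) (hn : 0 < n) (S : Finset (CellIdx d n m))
    (hS : ∀ p ∈ S, ∃ z ∈ gridCell p, z.1 i = x) :
    S.card * n ≤ n ^ d * m := by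
  have h : ∀ p ∈ S, ((p.1 i : ℕ)) = ⌊x * n⌋₊ := by
    intro p hp
    obtain ⟨z, hz, rfl⟩ := hS p hp
    exact idx_eq_floor hn (hz.1 i).1 (hz.1 i).2
  have := Finset.card_le_card_of_injOn (s := S ×ˢ (Finset.univ : Finset (Fin n)))
    (t := (Finset.univ : Finset (CellIdx d n m)))
    (fun q => (Function.update q.1.1 i q.2, q.1.2)) (by simp) (by
      rintro ⟨⟨f, c⟩, e⟩ hq ⟨⟨f', c'⟩, e'⟩ hq' heq
      simp only [Finset.coe_product, Finset.coe_univ, mem_prod, Finset.mem_coe, mem_univ,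
        and_true] at hq hq'
      simp only [Prod.mk.injEq] at heq ⊢
      obtain ⟨h1, h2⟩ := heq
      refine ⟨⟨?_, h2⟩, by simpa using congrFun h1 i⟩
      funext j
      by_cases hj : j = i
      · subst hj; exact Fin.ext ((h _ hq).trans (h _ hq').symm)
      · simpa [hj] using congrFun h1 j)
  simpa using this

lemma frontier_cases {d : ℕ} (ψ : (Fin d → ℝ) → ℝ) (u : Fin d → ℝ) {z : (Fin d → ℝ) × ℝ}
    (hz : z ∈ frontier (Jstar₁ ψ u) \ frontier (unitCubeP d)) :
    (∀ i, 0 < z.1 i ∧ z.1 i < 1) ∧ (0 < z.2 ∧ z.2 < 1) ∧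
      (z ∈ frontier (graphRegion₁ ψ) ∨ ∃ i, z.1 i = u i) := by
  obtain ⟨hz, hzc⟩ := hz
  have hclosed : IsClosed (unitCubeP d) := isClosed_Icc.prod isClosed_Icc
  have hsub : Jstar₁ ψ u ⊆ unitCubeP d := fun x hx => ⟨hx.2.1, hx.2.2.1⟩
  have hzcube : z ∈ unitCubeP d := hclosed.closure_subset_iff.2 hsub (frontier_subset_closure hz)
  have hint : z ∈ interior (unitCubeP d) := by
    rw [hclosed.frontier_eq] at hzc
    by_contra hh; exact hzc ⟨hzcube, hh⟩
  rw [unitCubeP, interior_prod_eq, interior_Icc, ← Set.pi_univ_Icc, interior_pi_set finite_univ] at hint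
  simp only [interior_Icc, mem_prod, Set.mem_pi, mem_univ, true_implies, mem_Ioo, Pi.zero_apply,
    Pi.one_apply] at hint
  refine ⟨hint.1, hint.2, ?_⟩
  rcases frontier_inter_subset _ _ hz with h | h
  · right
    by_contra! hne
    have hcl : closure (lowerBox u ×ˢ Icc (0:ℝ) 1) ⊆ {y | ∀ i, y.1 i ≤ u i} := by
      apply closure_minimal
      · intro y hy i; exact (hy.1 i).2.le
      · simp only [Set.ofPred_forall]
        exact isClosed_iInter fun i => isClosed_le (by fun_prop) (by fun_prop)
    have hle := hcl (frontier_subset_closure h.1)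
    have hopen : IsOpen ((Set.pi univ fun i => Ioo 0 (u i)) ×ˢ Ioo (0:ℝ) 1) :=
      (isOpen_set_pi finite_univ fun i _ => isOpen_Ioo).prod isOpen_Ioo
    have : z ∈ interior (lowerBox u ×ˢ Icc (0:ℝ) 1) := by
      refine mem_interior.2 ⟨_, ?_, hopen, ?_⟩
      · rintro y ⟨hy1, hy2⟩
        exact ⟨fun i => ⟨(hy1 i trivial).1.le, (hy1 i trivial).2⟩, hy2.1.le, hy2.2.le⟩
      · exact ⟨fun i _ => ⟨(hint.1 i).1, lt_of_le_of_ne (hle i) (hne i)⟩, hint.2⟩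
    exact h.1.2 this
  · exact Or.inl h.2

lemma minkowski_bound {d : ℕ} {ψ : (Fin d → ℝ) → ℝ} {MA : ℝ}
    (hMink : HasMinkowskiContentP (graphRegion₁ ψ) MA) :
    ∃ ε₀ > 0, ∀ ε, 0 < ε → ε < ε₀ →
      (volume (euclNbhdP (frontier (graphRegion₁ ψ)) ε)).toReal ≤ (MA + 1) * (2 * ε) := by
  have h := hMink.eventually (gt_mem_nhds (show MA < MA + 1 by linarith))
  rw [eventually_nhdsWithin_iff, Metric.eventually_nhds_iff] at h
  obtain ⟨ε₀, h0, h⟩ := h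
  refine ⟨ε₀, h0, fun ε hε hlt => ?_⟩
  have := h (y := ε) (by simpa [abs_of_pos hε] using hlt) hε
  rw [div_lt_iff₀ (by positivity)] at this
  exact this.le

/-- **Minkowski content bounds the covering numbers** (inequality (8) of the paper, with
`s = d+1`): if `∂A` admits an `(s-1)`-dimensional Minkowski content, then
`Γ_k(ψ) ≤ c b^{(1-1/s)k}` for all `k`, i.e. for every `u ∈ [0,1]^{s-1}` the set
`∂J_u* \ ∂[0,1]^s` is covered by at most `c b^{(1-1/s)k}` pairwise disjoint `b`-adic
elementary intervals of order `k`. -/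
theorem covering_number_of_minkowski (d : ℕ) (hd : 1 ≤ d) (b : ℕ) (hb : 2 ≤ b)
    (ψ : (Fin d → ℝ) → ℝ) (hmeas : Measurable ψ)
    (hψ : ∀ z ∈ Icc (0 : Fin d → ℝ) 1, ψ z ∈ Icc (0 : ℝ) 1)
    (MA : ℝ) (hMApos : 0 < MA) (hMink : HasMinkowskiContentP (graphRegion₁ ψ) MA) :
    ∃ c : ℝ, 0 < c ∧
      ∀ k : ℕ, ∀ u ∈ Icc (0 : Fin d → ℝ) 1, ∃ v : ℕ,
        (v : ℝ) ≤ c * (b : ℝ) ^ ((1 - 1 / (d + 1 : ℝ)) * k) ∧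
        ∃ U : Fin v → Set ((Fin d → ℝ) × ℝ),
          (∀ i, IsElemIntervalP b k (U i)) ∧
          (∀ i j, i ≠ j → Disjoint (U i) (U j)) ∧
          frontier (Jstar₁ ψ u) \ frontier (unitCubeP d) ⊆ ⋃ i, U i := by
  classical
  obtain ⟨ε₀, hε₀, hM⟩ := minkowski_bound hMink
  have hFsub : frontier (graphRegion₁ ψ) ⊆ unitCubeP d :=
    frontier_subset_closure.trans
      ((isClosed_Icc.prod isClosed_Icc).closure_subset_iff.2 fun x hx => ⟨hx.1, hx.2.1⟩)
  set D : ℝ := (d + 1) / ε₀ + 2 * (MA + 1) * (d + 1) with hD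
  have hDpos : 0 < D := by positivity
  have hb0 : 0 < b := by omega
  have hbR : (0 : ℝ) < b := by exact_mod_cast hb0
  refine ⟨(D + d) * b, by positivity, fun k u hu => ?_⟩
  set q := k / (d + 1) with hq
  set r := k % (d + 1) with hr
  have hk : (d + 1) * q + r = k := Nat.div_add_mod k (d + 1)
  have hrlt : r < d + 1 := Nat.mod_lt _ (by omega)
  have hn : 0 < b ^ q := by positivity
  have hm : 0 < b ^ (q + r) := by positivity
  have hnm : b ^ q ≤ b ^ (q + r) := Nat.pow_le_pow_right hb0 (by omega)
  have htot : (b ^ q) ^ d * b ^ (q + r) = b ^ (d * q + r) * b ^ q := by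
    rw [← pow_mul, ← pow_add, ← pow_add]; congr 1; ring
  let SA : Finset (CellIdx d (b ^ q) (b ^ (q + r))) :=
    Finset.univ.filter fun p => (gridCell p ∩ frontier (graphRegion₁ ψ)).Nonempty
  let SH : Fin d → Finset (CellIdx d (b ^ q) (b ^ (q + r))) := fun i =>
    Finset.univ.filter fun p => ∃ z ∈ gridCell p, z.1 i = u i
  let S := SA ∪ Finset.univ.biUnion SH
  set W : ℝ := (b : ℝ) ^ (d * q + r) with hW
  have hWpos : 0 < W := by positivity
  have hbq : (0 : ℝ) < (b : ℝ) ^ q := by positivity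
  have hSH : ∀ i, ((SH i).card : ℝ) ≤ W := by
    intro i
    have h := count_slice i (u i) hn (SH i) (fun p hp => (Finset.mem_filter.1 hp).2)
    rw [htot] at h
    have := Nat.le_of_mul_le_mul_right h hn
    rw [hW]; exact_mod_cast this
  have hSA : (SA.card : ℝ) ≤ D * W := by
    by_cases hε : ((d : ℝ) + 1) / ((b ^ q : ℕ) : ℝ) < ε₀
    · have h1 := count_volume hn hnm hFsub SA (fun p hp => (Finset.mem_filter.1 hp).2)
      have h2 := h1.trans (hM _ (by positivity) hε)
      have h3 : (1 / ((b ^ q : ℕ) : ℝ)) ^ d * (1 / ((b ^ (q + r) : ℕ) : ℝ)) = 1 / (W * (b : ℝ) ^ q) := by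
        rw [one_div_pow, one_div_mul_one_div]
        congr 1
        rw [hW]; exact_mod_cast htot
      rw [h3, mul_one_div, div_le_iff₀ (by positivity)] at h2
      have h4 : (MA + 1) * (2 * (((d : ℝ) + 1) / ((b ^ q : ℕ) : ℝ))) * (W * (b : ℝ) ^ q)
          = 2 * (MA + 1) * (d + 1) * W := by
        push_cast
        field_simp
      rw [h4] at h2
      refine h2.trans (mul_le_mul_of_nonneg_right ?_ hWpos.le)
      have : (0 : ℝ) ≤ (d + 1) / ε₀ := by positivity
      linarith
    · have h1 : (SA.card : ℝ) ≤ W * (b : ℝ) ^ q := by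
        have h := Finset.card_le_univ SA
        simp only [CellIdx, Fintype.card_prod, Fintype.card_fun, Fintype.card_fin] at h
        rw [htot] at h
        rw [hW]; exact_mod_cast h
      rw [not_lt, le_div_iff₀ (by positivity)] at hε
      push_cast at hε
      have h2 : (b : ℝ) ^ q ≤ (d + 1) / ε₀ := by
        rw [le_div_iff₀ hε₀]; linarith
      have h3 : (0 : ℝ) ≤ 2 * (MA + 1) * (d + 1) := by positivity
      calc (SA.card : ℝ) ≤ W * (b : ℝ) ^ q := h1
        _ ≤ W * D := mul_le_mul_of_nonneg_left (by linarith) hWpos.le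
        _ = D * W := mul_comm _ _
  have hScard : (S.card : ℝ) ≤ (D + d) * W := by
    have h1 : S.card ≤ SA.card + ∑ i, (SH i).card :=
      (Finset.card_union_le _ _).trans (Nat.add_le_add_left Finset.card_biUnion_le _)
    have h2 : (S.card : ℝ) ≤ SA.card + ∑ i, ((SH i).card : ℝ) := by exact_mod_cast h1
    have h3 : ∑ i, ((SH i).card : ℝ) ≤ ∑ i : Fin d, W := Finset.sum_le_sum fun i _ => hSH i
    simp only [Finset.sum_const, Finset.card_univ, Fintype.card_fin, nsmul_eq_mul] at h3
    linarith
  have hWle : W ≤ b * (b : ℝ) ^ ((1 - 1 / (d + 1 : ℝ)) * k) := by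
    have h1 : (b : ℝ) * (b : ℝ) ^ ((1 - 1 / (d + 1 : ℝ)) * k)
        = (b : ℝ) ^ (1 + (1 - 1 / (d + 1 : ℝ)) * k) := by
      rw [Real.rpow_add hbR, Real.rpow_one]
    rw [h1, hW, ← Real.rpow_natCast]
    apply Real.rpow_le_rpow_of_exponent_le (by exact_mod_cast hb0)
    have hkR : ((d : ℝ) + 1) * q + r = k := by exact_mod_cast hk
    have hrR : (r : ℝ) ≤ d + 1 := by exact_mod_cast hrlt.le
    rw [← hkR]
    have hd1 : (0 : ℝ) < d + 1 := by positivity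
    have : (1 - 1 / (d + 1 : ℝ)) * (((d : ℝ) + 1) * q + r) = d * q + r - r / (d + 1) := by
      field_simp; ring
    rw [this]
    push_cast
    have : (r : ℝ) / (d + 1) ≤ 1 := by rw [div_le_one hd1]; exact hrR
    linarith
  refine ⟨S.card, ?_, fun j => gridCell (S.equivFin.symm j).1, ?_, ?_, ?_⟩
  · calc (S.card : ℝ) ≤ (D + d) * W := hScard
      _ ≤ (D + d) * (b * (b : ℝ) ^ ((1 - 1 / (d + 1 : ℝ)) * k)) :=
        mul_le_mul_of_nonneg_left hWle (by positivity)
      _ = _ := by ring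
  · intro j
    set p := (S.equivFin.symm j).1
    refine ⟨fun _ => q, q + r, fun i => p.1 i, p.2, fun i => (p.1 i).2, p.2.2, ?_, ?_⟩
    · simp; linarith
    · simp [gridCell, p]
  · intro i j hij
    apply gridCell_disjoint hn hm
    intro h
    exact hij (S.equivFin.symm.injective (Subtype.ext h))
  · intro z hz
    obtain ⟨h1, h2, h3⟩ := frontier_cases ψ u hz
    obtain ⟨p, hp⟩ := exists_gridCell (d := d) hn hm (fun i => ⟨(h1 i).1.le, (h1 i).2⟩)
      ⟨h2.1.le, h2.2⟩
    have hpS : p ∈ S := by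
      rcases h3 with h3 | ⟨i, hi⟩
      · exact Finset.mem_union_left _ (Finset.mem_filter.2 ⟨Finset.mem_univ _, z, hp, h3⟩)
      · exact Finset.mem_union_right _ (Finset.mem_biUnion.2 ⟨i, Finset.mem_univ _,
          Finset.mem_filter.2 ⟨Finset.mem_univ _, z, hp, hi⟩⟩)
    refine mem_iUnion.2 ⟨S.equivFin ⟨p, hpS⟩, ?_⟩
    simpa using hp
end

section
/- Let b ≥ 2 and ℓ ≥ 2 be integers and let ψ_ℓ : [0,1) → [0,1] be the digit function ψ_ℓ(x) = Σ_{i=1}^∞ ξ_i b^{−i(ℓ−1)}, where ξ_1, ξ_2, … are the b-adic digits of x (not eventually b−1). Then for every k ∈ ℕ, the covering number satisfies Γ_k(ψ_ℓ) ≤ ℓ b^{k/ℓ + ℓ − 1}, i.e. Γ_k(ψ_ℓ) ≤ ℓ b^{ℓ−1} b^{⌈k/ℓ⌉}, where Γ_k(ψ_ℓ) is the supremum over t ∈ [0,1] of the minimal number of pairwise disjoint 2-dimensional b-adic elementary intervals of order k needed to cover ∂J_t* \ ∂[0,1]², with A = {(x,y) ∈ [0,1]² : ψ_ℓ(x) ≥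 y} and J_t* = ([0,t) × [0,1]) ∩ A. -/
open MeasureTheory Set

/-- The digit function `ψ_ℓ(x) = ∑_{i≥1} ξ_i b^{-i(ℓ-1)}`, where
`ξ_i = ⌊b^i x⌋ - b⌊b^{i-1} x⌋` are the `b`-adic digits of `x` (not eventually `b-1`). -/
noncomputable def psiDigit (b ℓ : ℕ) (x : ℝ) : ℝ :=
  ∑' i : ℕ, ((⌊(b : ℝ) ^ (i + 1) * x⌋ - (b : ℤ) * ⌊(b : ℝ) ^ i * x⌋ : ℤ) : ℝ)
    / (b : ℝ) ^ ((i + 1) * (ℓ - 1))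

/-- The region `A = {(x,y) ∈ [0,1]² : ψ_ℓ(x) ≥ y}`. -/
noncomputable def regionA (b ℓ : ℕ) : Set (ℝ × ℝ) :=
  {p | p.1 ∈ Icc (0 : ℝ) 1 ∧ p.2 ∈ Icc (0 : ℝ) 1 ∧ p.2 ≤ psiDigit b ℓ p.1}

/-- The test set `J_t* = ([0,t) × [0,1]) ∩ A`. -/
noncomputable def Jstar2 (b ℓ : ℕ) (t : ℝ) : Set (ℝ × ℝ) :=
  (Ico (0 : ℝ) t ×ˢ Icc (0 : ℝ) 1) ∩ regionA b ℓ

/-- The closed unit square `[0,1]²`. -/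
def unitSq : Set (ℝ × ℝ) := Icc (0 : ℝ) 1 ×ˢ Icc (0 : ℝ) 1

/-- A 2-dimensional `b`-adic elementary interval of order `k`. -/
def IsElemInterval2 (b k : ℕ) (E : Set (ℝ × ℝ)) : Prop :=
  ∃ d₁ d₂ a₁ a₂ : ℕ, a₁ < b ^ d₁ ∧ a₂ < b ^ d₂ ∧ d₁ + d₂ = k ∧
    E = Ico ((a₁ : ℝ) / b ^ d₁) (((a₁ : ℝ) + 1) / b ^ d₁)
          ×ˢ Ico ((a₂ : ℝ) / b ^ d₂) (((a₂ : ℝ) + 1) / b ^ d₂)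

lemma psi_term_nonneg (b m : ℕ) (x : ℝ) (i : ℕ) :
    0 ≤ ((⌊(b : ℝ) ^ (i + 1) * x⌋ - (b : ℤ) * ⌊(b : ℝ) ^ i * x⌋ : ℤ) : ℝ)
    / (b : ℝ) ^ ((i + 1) * (m + 1 - 1)) := by
  apply div_nonneg _ (by positivity)
  have : (b : ℤ) * ⌊(b : ℝ) ^ i * x⌋ ≤ ⌊(b : ℝ) ^ (i + 1) * x⌋ := by
    rw [Int.le_floor]
    push_cast
    have := Int.floor_le ((b : ℝ) ^ i * x)
    have hb : (0 : ℝ) ≤ b := by positivity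
    calc (b : ℝ) * ⌊(b : ℝ) ^ i * x⌋ ≤ b * ((b : ℝ) ^ i * x) := by gcongr
      _ = _ := by ring
  exact_mod_cast sub_nonneg.mpr this

lemma psi_partial (b m : ℕ) (hb : 2 ≤ b) (hm : 1 ≤ m) (x : ℝ) (n : ℕ) :
    ∑ i ∈ Finset.range n, ((⌊(b : ℝ) ^ (i + 1) * x⌋ - (b : ℤ) * ⌊(b : ℝ) ^ i * x⌋ : ℤ) : ℝ)
    / (b : ℝ) ^ ((i + 1) * (m + 1 - 1)) ≤ x - ⌊x⌋ := by
  have hb0 : (0 : ℝ) < b := by positivity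
  have hb1 : (1 : ℝ) ≤ b := by exact_mod_cast (by omega : 1 ≤ b)
  have key : ∑ i ∈ Finset.range n, ((⌊(b : ℝ) ^ (i + 1) * x⌋ - (b : ℤ) * ⌊(b : ℝ) ^ i * x⌋ : ℤ) : ℝ)
    / (b : ℝ) ^ ((i + 1) * (m + 1 - 1)) ≤ ⌊(b : ℝ) ^ n * x⌋ / (b : ℝ) ^ n - ⌊x⌋ := by
    induction n with
    | zero => simp
    | succ n ih =>
      rw [Finset.sum_range_succ]
      have h0 := psi_term_nonneg b 1 x n
      have h1 : ((⌊(b : ℝ) ^ (n + 1) * x⌋ - (b : ℤ) * ⌊(b : ℝ) ^ n * x⌋ : ℤ) : ℝ)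
        / (b : ℝ) ^ ((n + 1) * (m + 1 - 1)) ≤
        ((⌊(b : ℝ) ^ (n + 1) * x⌋ - (b : ℤ) * ⌊(b : ℝ) ^ n * x⌋ : ℤ) : ℝ)
        / (b : ℝ) ^ (n + 1) := by
        have hn : (0 : ℝ) ≤ ((⌊(b : ℝ) ^ (n + 1) * x⌋ - (b : ℤ) * ⌊(b : ℝ) ^ n * x⌋ : ℤ) : ℝ) := by
          have hp : (0 : ℝ) < (b : ℝ) ^ ((n + 1) * (1 + 1 - 1)) := by positivity
          by_contra h
          exact absurd h0 (not_le.mpr (div_neg_of_neg_of_pos (not_le.mp h) hp))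
        apply div_le_div_of_nonneg_left hn (by positivity)
        apply pow_le_pow_right₀ hb1
        simp only [Nat.add_sub_cancel]
        exact Nat.le_mul_of_pos_right _ hm
      have h2 : ((⌊(b : ℝ) ^ (n + 1) * x⌋ - (b : ℤ) * ⌊(b : ℝ) ^ n * x⌋ : ℤ) : ℝ)
        / (b : ℝ) ^ (n + 1) = ⌊(b : ℝ) ^ (n + 1) * x⌋ / (b : ℝ) ^ (n + 1)
          - ⌊(b : ℝ) ^ n * x⌋ / (b : ℝ) ^ n := by
        push_cast
        field_simp
        ring
      linarith
  have h3 : ⌊(b : ℝ) ^ n * x⌋ / (b : ℝ) ^ n ≤ x := by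
    rw [div_le_iff₀ (by positivity), mul_comm x]
    exact Int.floor_le _
  linarith

lemma psi_summable (b m : ℕ) (hb : 2 ≤ b) (hm : 1 ≤ m) (x : ℝ) :
    Summable fun i : ℕ => ((⌊(b : ℝ) ^ (i + 1) * x⌋ - (b : ℤ) * ⌊(b : ℝ) ^ i * x⌋ : ℤ) : ℝ)
    / (b : ℝ) ^ ((i + 1) * (m + 1 - 1)) :=
  summable_of_sum_range_le (psi_term_nonneg b m x) (psi_partial b m hb hm x)

lemma psi_nonneg (b m : ℕ) (x : ℝ) : 0 ≤ psiDigit b (m + 1) x :=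
  tsum_nonneg (psi_term_nonneg b m x)

lemma psi_lt_one (b m : ℕ) (hb : 2 ≤ b) (hm : 1 ≤ m) (x : ℝ) : psiDigit b (m + 1) x < 1 := by
  have : psiDigit b (m + 1) x ≤ x - ⌊x⌋ :=
    (psi_summable b m hb hm x).tsum_le_of_sum_range_le (psi_partial b m hb hm x)
  linarith [Int.lt_floor_add_one x]

lemma psi_zero (b m : ℕ) : psiDigit b (m + 1) 0 = 0 := by
  simp [psiDigit]

lemma psi_fe (b m : ℕ) (hb : 2 ≤ b) (hm : 1 ≤ m) (c : ℕ) (hc : c < b) (x : ℝ)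
    (h0 : 0 ≤ x) (h1 : x < 1) :
    psiDigit b (m + 1) ((x + c) / b) = (c + psiDigit b (m + 1) x) / (b : ℝ) ^ m := by
  have hb0 : (0 : ℝ) < b := by positivity
  have hfl : ∀ i : ℕ, ⌊(b : ℝ) ^ (i + 1) * ((x + c) / b)⌋ = ⌊(b : ℝ) ^ i * x⌋ + (b : ℤ) ^ i * c := by
    intro i
    rw [← Int.floor_add_intCast]
    congr 1
    push_cast
    field_simp
    ring
  have hfl0 : ⌊(x + c) / b⌋ = 0 := by
    rw [Int.floor_eq_zero_iff]
    refine ⟨by positivity, ?_⟩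
    rw [div_lt_one hb0]
    have : (c : ℝ) + 1 ≤ b := by exact_mod_cast hc
    linarith
  have hflx : ⌊x⌋ = 0 := by
    rw [Int.floor_eq_zero_iff]; exact ⟨h0, h1⟩
  unfold psiDigit
  rw [(psi_summable b m hb hm ((x + c) / b)).tsum_eq_zero_add, add_div (c : ℝ)]
  congr 1
  · rw [hfl]; simp [hfl0, hflx]
  · rw [← tsum_div_const]
    congr 1
    ext i
    rw [hfl, hfl, div_div, ← pow_add]
    congr 1
    · congr 1; ring
    · congr 1; simp; ring

lemma psi_floor (b : ℕ) (hb : 2 ≤ b) (x : ℝ) (h0 : 0 ≤ x) (h1 : x < 1) :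
    ∃ c : ℕ, c < b ∧ ∃ y : ℝ, 0 ≤ y ∧ y < 1 ∧ x = (y + c) / b := by
  have hb0 : (0 : ℝ) < b := by positivity
  have hf := Nat.floor_le (show 0 ≤ b * x by positivity)
  refine ⟨⌊b * x⌋₊, ?_, b * x - ⌊b * x⌋₊, ?_, ?_, ?_⟩
  · rw [Nat.floor_lt (by positivity)]
    nlinarith
  · linarith
  · linarith [Nat.lt_floor_add_one (b * x)]
  · field_simp; ring

lemma psi_almost_mono (b m : ℕ) (hb : 2 ≤ b) (hm : 1 ≤ m) (n : ℕ) : ∀ x u : ℝ, 0 ≤ x → x ≤ u →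
    u < 1 → psiDigit b (m + 1) x ≤ psiDigit b (m + 1) u + (1 / 2) ^ n := by
  have hb2 : (2 : ℝ) ≤ b := by exact_mod_cast hb
  have hbm : (2 : ℝ) ≤ (b : ℝ) ^ m := hb2.trans (le_self_pow₀ (by linarith) (by omega))
  induction n with
  | zero =>
    intro x u _ _ _
    have := psi_lt_one b m hb hm x
    have := psi_nonneg b m u
    simp; linarith
  | succ n ih =>
    intro x u hx hxu hu
    obtain ⟨c, hc, y, hy0, hy1, rfl⟩ := psi_floor b hb x hx (by linarith)
    obtain ⟨d, hd, z, hz0, hz1, rfl⟩ := psi_floor b hb u (by linarith) hu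
    rw [psi_fe b m hb hm c hc y hy0 hy1, psi_fe b m hb hm d hd z hz0 hz1]
    have hle : y + c ≤ z + d := by
      rwa [div_le_div_iff_of_pos_right (by linarith)] at hxu
    have hcd : c ≤ d := by
      by_contra h
      have : (d : ℝ) + 1 ≤ c := by exact_mod_cast not_le.mp h
      linarith
    rw [div_add' _ _ _ (by positivity)]
    apply div_le_div_of_nonneg_right _ (by positivity)
    have hp : (0 : ℝ) < (1 / 2) ^ n := by positivity
    have h2 : ((1 : ℝ) / 2) ^ n ≤ (1 / 2) ^ (n + 1) * (b : ℝ) ^ m := by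
      rw [pow_succ]; nlinarith
    rcases hcd.eq_or_lt with rfl | h
    · have := ih y z hy0 (by linarith) hz1
      linarith
    · have : (c : ℝ) + 1 ≤ d := by exact_mod_cast h
      have := psi_lt_one b m hb hm y
      have := psi_nonneg b m z
      linarith

lemma psi_mono (b m : ℕ) (hb : 2 ≤ b) (hm : 1 ≤ m) (x u : ℝ) (h0 : 0 ≤ x) (h : x ≤ u)
    (h1 : u < 1) : psiDigit b (m + 1) x ≤ psiDigit b (m + 1) u := by
  apply le_of_forall_pos_le_add
  intro ε hε
  obtain ⟨n, hn⟩ := exists_pow_lt_of_lt_one hε (show (1 / 2 : ℝ) < 1 by norm_num)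
  linarith [psi_almost_mono b m hb hm n x u h0 h h1]

lemma psi_rc (b m : ℕ) (hb : 2 ≤ b) (hm : 1 ≤ m) (n : ℕ) : ∀ x : ℝ, 0 ≤ x → x < 1 →
    ∃ δ > 0, ∀ u, x ≤ u → u < x + δ → u < 1 →
      psiDigit b (m + 1) u ≤ psiDigit b (m + 1) x + (1 / 2) ^ n := by
  have hb2 : (2 : ℝ) ≤ b := by exact_mod_cast hb
  have hbm : (2 : ℝ) ≤ (b : ℝ) ^ m := hb2.trans (le_self_pow₀ (by linarith) (by omega))
  induction n with
  | zero =>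
    intro x _ _
    refine ⟨1, one_pos, fun u _ _ _ => ?_⟩
    have := psi_lt_one b m hb hm u
    have := psi_nonneg b m x
    simp; linarith
  | succ n ih =>
    intro x hx hx1
    obtain ⟨c, hc, y, hy0, hy1, rfl⟩ := psi_floor b hb x hx (by linarith)
    obtain ⟨δ, hδ, H⟩ := ih y hy0 hy1
    refine ⟨min δ (1 - y) / b, div_pos (lt_min hδ (by linarith)) (by linarith), ?_⟩
    intro u hu hu2 hu1
    have hb0 : (0 : ℝ) < b := by linarith
    rw [← add_div, lt_div_iff₀ hb0] at hu2
    rw [div_le_iff₀ hb0] at hu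
    have e1 := min_le_left δ (1 - y)
    have e2 := min_le_right δ (1 - y)
    obtain ⟨z, hz⟩ : ∃ z, z = u * b - c := ⟨_, rfl⟩
    have hu3 : u = (z + c) / b := by rw [hz]; field_simp; ring
    have := H z (by linarith) (by linarith) (by linarith)
    rw [hu3, psi_fe b m hb hm c hc y hy0 hy1, psi_fe b m hb hm c hc z (by linarith) (by linarith)]
    rw [div_add' _ _ _ (by positivity)]
    apply div_le_div_of_nonneg_right _ (by positivity)
    have hp : (0 : ℝ) < (1 / 2) ^ n := by positivity
    have h2 : ((1 : ℝ) / 2) ^ n ≤ (1 / 2) ^ (n + 1) * (b : ℝ) ^ m := by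
      rw [pow_succ]; nlinarith
    linarith

/-- Superset of the frontier. -/
def Gset (b m : ℕ) (t : ℝ) : Set (ℝ × ℝ) :=
  {p | 0 ≤ p.1 ∧ p.1 < 1 ∧ 0 ≤ p.2 ∧ p.2 < 1 ∧ p.1 ≤ t ∧ p.2 ≤ psiDigit b (m + 1) p.1 ∧
    (p.1 = t ∨ ∀ u, 0 ≤ u → u < p.1 → psiDigit b (m + 1) u ≤ p.2)}

lemma frontier_sub_s17 (b m : ℕ) (hb : 2 ≤ b) (hm : 1 ≤ m) (t : ℝ) (ht : t ∈ Icc (0 : ℝ) 1) :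
    frontier (Jstar2 b (m + 1) t) \ frontier unitSq ⊆ Gset b m t := by
  rintro ⟨x, y⟩ ⟨hp, hq⟩
  have hcl : IsClosed unitSq := isClosed_Icc.prod isClosed_Icc
  have hJ : Jstar2 b (m + 1) t ⊆ unitSq := by
    rintro ⟨u, v⟩ ⟨_, h1, h2, _⟩
    exact ⟨h1, h2⟩
  have hc : (x, y) ∈ closure (Jstar2 b (m + 1) t) := hp.1
  have hxt : x ≤ t := by
    have : closure (Jstar2 b (m + 1) t) ⊆ {p | p.1 ≤ t} :=
      closure_minimal (fun p hp => hp.1.1.2.le) (isClosed_le continuous_fst continuous_const)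
    exact this hc
  have hin : (x, y) ∈ interior unitSq := by
    by_contra h
    exact hq ⟨subset_closure (closure_minimal hJ hcl hc), h⟩
  have hi : x ∈ Ioo (0 : ℝ) 1 ∧ y ∈ Ioo (0 : ℝ) 1 := by
    rw [unitSq, interior_prod_eq, interior_Icc] at hin
    exact hin
  obtain ⟨⟨hx0, hx1⟩, hy0, hy1⟩ := hi
  refine ⟨hx0.le, hx1, hy0.le, hy1, hxt, ?_, ?_⟩
  · by_contra h
    simp only [not_le] at h
    obtain ⟨n, hn⟩ := exists_pow_lt_of_lt_one (show 0 < (y - psiDigit b (m + 1) x) / 2 by linarith)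
      (show (1 / 2 : ℝ) < 1 by norm_num)
    obtain ⟨δ, hδ, H⟩ := psi_rc b m hb hm n x hx0.le hx1
    have hU : Iio (x + δ) ×ˢ Ioi ((y + psiDigit b (m + 1) x) / 2) ∈ nhds (x, y) :=
      (isOpen_Iio.prod isOpen_Ioi).mem_nhds
        ⟨show x < x + δ by linarith, show (y + psiDigit b (m + 1) x) / 2 < y by linarith⟩
    obtain ⟨⟨u, v⟩, ⟨hu1, hv1⟩, ⟨⟨hu2, hu3⟩, _⟩, _, _, hv2⟩ := mem_closure_iff_nhds.mp hc _ hU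
    simp only [mem_Iio, mem_Ioi] at hu1 hv1 hu2 hu3 hv2
    have hut : u < 1 := lt_of_lt_of_le hu3 ht.2
    rcases le_total u x with hux | hux
    · have := psi_mono b m hb hm u x hu2 hux hx1
      linarith
    · have := H u hux hu1 hut
      linarith
  · by_contra h
    push Not at h
    obtain ⟨hne, u, hu0, hux, hu⟩ := h
    simp only at hne hux hu
    apply hp.2
    rw [mem_interior]
    refine ⟨Ioo u t ×ˢ Ioo 0 (psiDigit b (m + 1) u), ?_, isOpen_Ioo.prod isOpen_Ioo,
      ⟨hux, lt_of_le_of_ne hxt hne⟩, hy0, hu⟩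
    rintro ⟨w, v⟩ ⟨⟨hw1, hw2⟩, hv1, hv2⟩
    simp only at hw1 hw2 hv1 hv2
    have h1 := ht.2
    have := psi_mono b m hb hm u w hu0 hw1.le (by linarith)
    have := psi_lt_one b m hb hm u
    exact ⟨⟨⟨by simp only; linarith, hw2⟩, by simp only; linarith, by simp only; linarith⟩,
      ⟨by simp only; linarith, by simp only; linarith⟩,
      ⟨by simp only; linarith, by simp only; linarith⟩, by simp only; linarith⟩

/-- Explicit box. -/
def eBox (b d₁ d₂ a₁ a₂ : ℕ) : Set (ℝ × ℝ) :=
  Ico ((a₁ : ℝ) / b ^ d₁) (((a₁ : ℝ) + 1) / b ^ d₁)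
          ×ˢ Ico ((a₂ : ℝ) / b ^ d₂) (((a₂ : ℝ) + 1) / b ^ d₂)

lemma mem_eBox (b : ℕ) (hb : 2 ≤ b) (d₁ d₂ a₁ a₂ : ℕ) (p : ℝ × ℝ) :
    p ∈ eBox b d₁ d₂ a₁ a₂ ↔ ((a₁ : ℝ) ≤ p.1 * b ^ d₁ ∧ p.1 * b ^ d₁ < a₁ + 1) ∧
      ((a₂ : ℝ) ≤ p.2 * b ^ d₂ ∧ p.2 * b ^ d₂ < a₂ + 1) := by
  have hb0 : (0 : ℝ) < b := by positivity
  unfold eBox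
  rw [mem_prod, mem_Ico, mem_Ico, div_le_iff₀ (by positivity), lt_div_iff₀ (by positivity),
    div_le_iff₀ (by positivity), lt_div_iff₀ (by positivity)]

lemma nat_eq_of_near (a c : ℕ) (x : ℝ) (h1 : (a : ℝ) ≤ x) (h2 : x < a + 1) (h3 : (c : ℝ) ≤ x)
    (h4 : x < c + 1) : a = c := by
  have e1 : (a : ℝ) < c + 1 := by linarith
  have e2 : (c : ℝ) < a + 1 := by linarith
  have e1' : a < c + 1 := by exact_mod_cast e1
  have e2' : c < a + 1 := by exact_mod_cast e2
  omega

/-- Coverability by disjoint elementary intervals. -/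
def Cov (b k : ℕ) (G : Set (ℝ × ℝ)) (n : ℕ) : Prop :=
  ∃ S : Finset (Set (ℝ × ℝ)), S.card ≤ n ∧ (∀ E ∈ S, IsElemInterval2 b k E) ∧
    (∀ E ∈ S, ∀ F ∈ S, (E ∩ F).Nonempty → E = F) ∧ ∀ p ∈ G, ∃ E ∈ S, p ∈ E

open Classical in
lemma elem_split (b k : ℕ) (hb : 2 ≤ b) (E : Set (ℝ × ℝ)) (hE : IsElemInterval2 b k E) :
    ∃ S : Finset (Set (ℝ × ℝ)), S.card ≤ b ∧ (∀ F ∈ S, IsElemInterval2 b (k + 1) F) ∧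
    (∀ A ∈ S, ∀ F ∈ S, (A ∩ F).Nonempty → A = F) ∧ (∀ F ∈ S, F ⊆ E) ∧
    ∀ p ∈ E, ∃ F ∈ S, p ∈ F := by
  obtain ⟨d₁, d₂, a₁, a₂, h1, h2, h3, hE⟩ := hE
  change E = eBox b d₁ d₂ a₁ a₂ at hE
  subst hE
  have hb0 : (0 : ℝ) < b := by positivity
  refine ⟨(Finset.range b).image fun c => eBox b (d₁ + 1) d₂ (a₁ * b + c) a₂, ?_, ?_, ?_, ?_, ?_⟩
  · exact Finset.card_image_le.trans (by simp)
  · intro F hF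
    obtain ⟨c, hc, rfl⟩ := Finset.mem_image.mp hF
    rw [Finset.mem_range] at hc
    refine ⟨d₁ + 1, d₂, a₁ * b + c, a₂, ?_, h2, by omega, rfl⟩
    rw [pow_succ]
    nlinarith
  · intro A hA F hF ⟨p, hpA, hpF⟩
    obtain ⟨c, hc, rfl⟩ := Finset.mem_image.mp hA
    obtain ⟨d, hd, rfl⟩ := Finset.mem_image.mp hF
    simp only [mem_eBox b hb] at hpA hpF
    rw [nat_eq_of_near _ _ _ hpA.1.1 hpA.1.2 hpF.1.1 hpF.1.2]
  · intro F hF p hp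
    obtain ⟨c, hc, rfl⟩ := Finset.mem_image.mp hF
    rw [Finset.mem_range] at hc
    rw [mem_eBox b hb] at hp ⊢
    obtain ⟨⟨e1, e2⟩, e3⟩ := hp
    refine ⟨⟨?_, ?_⟩, e3⟩
    · push_cast at e1
      rw [pow_succ] at e1
      by_contra h
      have : (0 : ℝ) ≤ c := by positivity
      nlinarith
    · push_cast at e2
      rw [pow_succ] at e2
      have : (c : ℝ) + 1 ≤ b := by exact_mod_cast hc
      by_contra h
      nlinarith
  · intro p hp
    rw [mem_eBox b hb] at hp
    obtain ⟨⟨e1, e2⟩, e3⟩ := hp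
    obtain ⟨c, hc, y, hy0, hy1, hy⟩ := psi_floor b hb (p.1 * b ^ d₁ - a₁) (by linarith) (by linarith)
    rw [eq_div_iff hb0.ne'] at hy
    refine ⟨_, Finset.mem_image_of_mem _ (Finset.mem_range.mpr hc), ?_⟩
    rw [mem_eBox b hb]
    have e : p.1 * (b : ℝ) ^ (d₁ + 1) = a₁ * b + c + y := by rw [pow_succ]; linarith
    refine ⟨⟨?_, ?_⟩, e3⟩
    · rw [e]; push_cast; linarith
    · rw [e]; push_cast; linarith

open Classical in
lemma cov_succ (b k : ℕ) (hb : 2 ≤ b) (G : Set (ℝ × ℝ)) (n : ℕ) (h : Cov b k G n) :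
    Cov b (k + 1) G (n * b) := by
  obtain ⟨S, h1, h2, h3, h4⟩ := h
  choose! T t1 t2 t3 t4 t5 using fun E hE => elem_split b k hb E (h2 E hE)
  refine ⟨S.biUnion T, ?_, ?_, ?_, ?_⟩
  · exact (Finset.card_biUnion_le_card_mul _ _ _ t1).trans (Nat.mul_le_mul_right _ h1)
  · intro F hF
    obtain ⟨E, hE, hF⟩ := Finset.mem_biUnion.mp hF
    exact t2 E hE F hF
  · intro F hF F' hF' hne
    obtain ⟨E, hE, hF⟩ := Finset.mem_biUnion.mp hF
    obtain ⟨E', hE', hF'⟩ := Finset.mem_biUnion.mp hF'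
    obtain rfl := h3 E hE E' hE' (hne.mono (inter_subset_inter (t4 E hE F hF) (t4 E' hE' F' hF')))
    exact t3 E hE F hF F' hF' hne
  · intro p hp
    obtain ⟨E, hE, hpE⟩ := h4 p hp
    obtain ⟨F, hF, hpF⟩ := t5 E hE p hpE
    exact ⟨F, Finset.mem_biUnion.mpr ⟨E, hE, hF⟩, hpF⟩

lemma cov_add (b k : ℕ) (hb : 2 ≤ b) (G : Set (ℝ × ℝ)) (n r : ℕ) (h : Cov b k G n) :
    Cov b (k + r) G (n * b ^ r) := by
  induction r with
  | zero => simpa using h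
  | succ r ih => rw [pow_succ, ← mul_assoc]; exact cov_succ b _ hb G _ ih

/-- The rescaling map. -/
def gmap (b m c : ℕ) (p : ℝ × ℝ) : ℝ × ℝ := (p.1 * b - c, p.2 * b ^ m - c)

lemma elem_scale (b m : ℕ) (hb : 2 ≤ b) (hm : 1 ≤ m) (k c : ℕ) (hc : c < b) (E : Set (ℝ × ℝ))
    (hE : IsElemInterval2 b k E) : IsElemInterval2 b (k + (m + 1)) (gmap b m c ⁻¹' E) := by
  obtain ⟨d₁, d₂, a₁, a₂, h1, h2, h3, hE⟩ := hE
  change E = eBox b d₁ d₂ a₁ a₂ at hE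
  subst hE
  have hbm : b ≤ b ^ m := Nat.le_self_pow (by omega) b
  refine ⟨d₁ + 1, d₂ + m, a₁ + c * b ^ d₁, a₂ + c * b ^ d₂, ?_, ?_, by omega, ?_⟩
  · rw [pow_succ]; nlinarith
  · rw [pow_add]; nlinarith [Nat.mul_le_mul_left (b ^ d₂) (show c + 1 ≤ b ^ m by omega)]
  · change _ = eBox _ _ _ _ _
    ext p
    rw [mem_preimage, mem_eBox b hb, mem_eBox b hb]
    simp only [gmap]
    push_cast
    have e1 : (p.1 * b - c) * (b : ℝ) ^ d₁ = p.1 * b ^ (d₁ + 1) - c * b ^ d₁ := by ring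
    have e2 : (p.2 * b ^ m - c) * (b : ℝ) ^ d₂ = p.2 * b ^ (d₂ + m) - c * b ^ d₂ := by ring
    rw [e1, e2]
    constructor <;> rintro ⟨⟨_, _⟩, _, _⟩ <;> refine ⟨⟨?_, ?_⟩, ?_, ?_⟩ <;> linarith

lemma elem_unit (b : ℕ) (hb : 2 ≤ b) (k : ℕ) (E : Set (ℝ × ℝ))
    (hE : IsElemInterval2 b k E) (p : ℝ × ℝ) (hp : p ∈ E) :
    (0 ≤ p.1 ∧ p.1 < 1) ∧ (0 ≤ p.2 ∧ p.2 < 1) := by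
  obtain ⟨d₁, d₂, a₁, a₂, h1, h2, h3, hE⟩ := hE
  change E = eBox b d₁ d₂ a₁ a₂ at hE
  subst hE
  rw [mem_eBox b hb] at hp
  have aux : ∀ (a d : ℕ) (x : ℝ), a < b ^ d → (a : ℝ) ≤ x * b ^ d → x * b ^ d < a + 1 →
      0 ≤ x ∧ x < 1 := by
    intro a d x h e1 e2
    have hp : (0 : ℝ) < (b : ℝ) ^ d := by positivity
    have h' : (a : ℝ) + 1 ≤ (b : ℝ) ^ d := by exact_mod_cast h
    have ha : (0 : ℝ) ≤ a := by positivity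
    constructor <;> by_contra hh <;> nlinarith
  exact ⟨aux _ _ _ h1 hp.1.1 hp.1.2, aux _ _ _ h2 hp.2.1 hp.2.2⟩

open Classical in
lemma cov_step (b m : ℕ) (hb : 2 ≤ b) (hm : 1 ≤ m) (f n : ℕ)
    (ih : ∀ t, Cov b f (Gset b m t) n) (t : ℝ) :
    Cov b (f + (m + 1)) (Gset b m t) (b * n + (b - 1) + (b - 1)) := by
  have hb0 : (0 : ℝ) < b := by positivity
  have hbm : b ≤ b ^ m := Nat.le_self_pow (by omega) b
  choose S s1 s2 s3 s4 using fun c : ℕ => ih (t * b - c)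
  -- admissible boxes
  let B : ℕ → ℕ → Set (ℝ × ℝ) := fun r j => eBox b (f + 1) m j r
  let J : ℕ → ℕ := fun r => if (r + 1) * b ^ f ≤ ⌊t * b ^ (f + 1)⌋₊ ∧
    ⌊t * b ^ (f + 1)⌋₊ < b ^ (f + 1) then ⌊t * b ^ (f + 1)⌋₊ else (r + 1) * b ^ f
  let S0 : Finset (Set (ℝ × ℝ)) :=
    (Finset.range b).biUnion fun c => (S c).image fun E => gmap b m c ⁻¹' E
  let S1 := (Finset.range (b - 1)).image fun r => B r ((r + 1) * b ^ f)
  let S2 := (Finset.range (b - 1)).image fun r => B r (J r)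
  have hfle : ∀ r, r < b - 1 → (r + 1) * b ^ f < b ^ (f + 1) := by
    intro r hr
    rw [pow_succ, mul_comm]
    exact Nat.mul_lt_mul_of_pos_left (by omega) (by positivity)
  have hJ : ∀ r, r < b - 1 → (r + 1) * b ^ f ≤ J r ∧ J r < b ^ (f + 1) := by
    intro r hr
    by_cases h : (r + 1) * b ^ f ≤ ⌊t * b ^ (f + 1)⌋₊ ∧ ⌊t * b ^ (f + 1)⌋₊ < b ^ (f + 1)
    · simp only [J, if_pos h]; exact h
    · simp only [J, if_neg h]; exact ⟨le_rfl, hfle r hr⟩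
  have hS0 : ∀ E ∈ S0, ∃ c < b, ∃ F ∈ S c, E = gmap b m c ⁻¹' F := by
    intro E hE
    obtain ⟨c, hc, hE⟩ := Finset.mem_biUnion.mp hE
    obtain ⟨F, hF, rfl⟩ := Finset.mem_image.mp hE
    exact ⟨c, Finset.mem_range.mp hc, F, hF, rfl⟩
  have hS12 : ∀ E ∈ S1 ∪ S2, ∃ r < b - 1, ∃ j, (r + 1) * b ^ f ≤ j ∧ j < b ^ (f + 1) ∧
      E = B r j := by
    intro E hE
    rcases Finset.mem_union.mp hE with hE | hE
    · obtain ⟨r, hr, rfl⟩ := Finset.mem_image.mp hE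
      have hr := Finset.mem_range.mp hr
      exact ⟨r, hr, _, le_rfl, hfle r hr, rfl⟩
    · obtain ⟨r, hr, rfl⟩ := Finset.mem_image.mp hE
      have hr := Finset.mem_range.mp hr
      exact ⟨r, hr, _, (hJ r hr).1, (hJ r hr).2, rfl⟩
  have hQ : ∀ c, ∀ F ∈ S c, ∀ p ∈ gmap b m c ⁻¹' F, ((c : ℝ) ≤ p.1 * b ∧ p.1 * b < c + 1) ∧
      ((c : ℝ) ≤ p.2 * b ^ m ∧ p.2 * b ^ m < c + 1) := by
    intro c F hF p hp
    have := elem_unit b hb f F (s2 c F hF) _ hp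
    simp only [gmap] at this
    refine ⟨⟨?_, ?_⟩, ?_, ?_⟩ <;> linarith [this.1.1, this.1.2, this.2.1, this.2.2]
  have hQB : ∀ c, ∀ F ∈ S c, ∀ r j, (r + 1) * b ^ f ≤ j → ∀ p ∈ gmap b m c ⁻¹' F,
      p ∈ B r j → False := by
    intro c F hF r j hj p hp hp2
    have h1 := hQ c F hF p hp
    simp only [B, mem_eBox b hb] at hp2
    obtain rfl := nat_eq_of_near _ _ _ h1.2.1 h1.2.2 hp2.2.1 hp2.2.2
    have hj' : ((c : ℝ) + 1) * (b : ℝ) ^ f ≤ j := by exact_mod_cast hj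
    have h2 := hp2.1.1
    have e : p.1 * (b : ℝ) ^ (f + 1) = p.1 * b * b ^ f := by ring
    have hpos : (0 : ℝ) < (b : ℝ) ^ f := by positivity
    have := h1.1.2
    nlinarith
  refine ⟨S0 ∪ (S1 ∪ S2), ?_, ?_, ?_, ?_⟩
  · have c0 : S0.card ≤ b * n := by
      have := Finset.card_biUnion_le_card_mul (Finset.range b)
        (fun c => (S c).image fun E => gmap b m c ⁻¹' E) n
        (fun c _ => Finset.card_image_le.trans (s1 c))
      simpa using this
    have c1 : S1.card ≤ b - 1 := Finset.card_image_le.trans (by simp)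
    have c2 : S2.card ≤ b - 1 := Finset.card_image_le.trans (by simp)
    have := Finset.card_union_le S0 (S1 ∪ S2)
    have := Finset.card_union_le S1 S2
    omega
  · intro E hE
    rcases Finset.mem_union.mp hE with hE | hE
    · obtain ⟨c, hc, F, hF, rfl⟩ := hS0 E hE
      exact elem_scale b m hb hm f c hc F (s2 c F hF)
    · obtain ⟨r, hr, j, hj1, hj2, rfl⟩ := hS12 E hE
      exact ⟨f + 1, m, j, r, hj2, by omega, by omega, rfl⟩
  · rintro E hE E' hE' ⟨p, hp, hp'⟩
    rcases Finset.mem_union.mp hE with hE | hE <;> rcases Finset.mem_union.mp hE' with hE' | hE'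
    · obtain ⟨c, hc, F, hF, rfl⟩ := hS0 E hE
      obtain ⟨c', hc', F', hF', rfl⟩ := hS0 E' hE'
      have h1 := hQ c F hF p hp
      have h2 := hQ c' F' hF' p hp'
      obtain rfl := nat_eq_of_near _ _ _ h1.1.1 h1.1.2 h2.1.1 h2.1.2
      rw [s3 c F hF F' hF' ⟨_, hp, hp'⟩]
    · obtain ⟨c, hc, F, hF, rfl⟩ := hS0 E hE
      obtain ⟨r, hr, j, hj1, hj2, rfl⟩ := hS12 E' hE'
      exact (hQB c F hF r j hj1 p hp hp').elim
    · obtain ⟨c, hc, F, hF, rfl⟩ := hS0 E' hE'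
      obtain ⟨r, hr, j, hj1, hj2, rfl⟩ := hS12 E hE
      exact (hQB c F hF r j hj1 p hp' hp).elim
    · obtain ⟨r, hr, j, hj1, hj2, rfl⟩ := hS12 E hE
      obtain ⟨r', hr', j', hj1', hj2', rfl⟩ := hS12 E' hE'
      simp only [B, mem_eBox b hb] at hp hp'
      obtain rfl := nat_eq_of_near _ _ _ hp.1.1 hp.1.2 hp'.1.1 hp'.1.2
      obtain rfl := nat_eq_of_near _ _ _ hp.2.1 hp.2.2 hp'.2.1 hp'.2.2
      rfl
  · rintro ⟨x, y⟩ ⟨hx0, hx1, hy0, hy1, hxt, hyx, hor⟩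
    simp only at hx0 hx1 hy0 hy1 hxt hyx hor
    obtain ⟨c, hc, z, hz0, hz1, hz⟩ := psi_floor b hb x hx0 hx1
    have hxz : x * b = z + c := by rw [hz]; field_simp
    have hpm : (0 : ℝ) < (b : ℝ) ^ m := by positivity
    have hpf : (0 : ℝ) < (b : ℝ) ^ f := by positivity
    have hyz : y * b ^ m ≤ c + psiDigit b (m + 1) z := by
      rw [hz, psi_fe b m hb hm c hc z hz0 hz1, le_div_iff₀ hpm] at hyx
      exact hyx
    by_cases hyc : (c : ℝ) ≤ y * b ^ m
    · have hG : gmap b m c (x, y) ∈ Gset b m (t * b - c) := by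
        have hl := psi_lt_one b m hb hm z
        have e1 : x * b - c = z := by linarith
        simp only [gmap, e1]
        refine ⟨hz0, hz1, by simp only; linarith, by simp only; linarith, ?_, by simp only; linarith, ?_⟩
        · simp only; nlinarith
        · rcases hor with h | h
          · left; simp only; rw [← h]; linarith
          · right
            intro u hu0 huz
            simp only at huz ⊢
            have := h ((u + c) / b) (by positivity) (by rw [hz]; gcongr)
            rw [psi_fe b m hb hm c hc u hu0 (by linarith), div_le_iff₀ hpm] at this
            linarith
      obtain ⟨E, hE, hpE⟩ := s4 c _ hG
      refine ⟨gmap b m c ⁻¹' E, Finset.mem_union_left _ ?_, hpE⟩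
      exact Finset.mem_biUnion.mpr ⟨c, Finset.mem_range.mpr hc, Finset.mem_image_of_mem _ hE⟩
    · push Not at hyc
      rcases hor with h | h
      · -- vertical line
        obtain ⟨r, hr⟩ : ∃ r, r = ⌊y * b ^ m⌋₊ := ⟨_, rfl⟩
        have hy' : 0 ≤ y * b ^ m := by positivity
        have hr1 : (r : ℝ) ≤ y * b ^ m := hr ▸ Nat.floor_le hy'
        have hr2 : y * b ^ m < r + 1 := hr ▸ Nat.lt_floor_add_one _
        have hrc : r < c := by
          have : (r : ℝ) < c := by linarith
          exact_mod_cast this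
        have hrc' : (r : ℝ) + 1 ≤ c := by exact_mod_cast hrc
        have ht0 : 0 ≤ t * b ^ (f + 1) := by rw [← h]; positivity
        have hcond : (r + 1) * b ^ f ≤ ⌊t * b ^ (f + 1)⌋₊ ∧ ⌊t * b ^ (f + 1)⌋₊ < b ^ (f + 1) := by
          constructor
          · apply Nat.le_floor
            push_cast
            rw [← h, pow_succ]
            have : x * ((b : ℝ) ^ f * b) = (z + c) * b ^ f := by rw [← hxz]; ring
            rw [this]
            exact mul_le_mul_of_nonneg_right (by linarith) hpf.le
          · rw [Nat.floor_lt ht0]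
            push_cast
            rw [← h]
            have : (0 : ℝ) < (b : ℝ) ^ (f + 1) := by positivity
            nlinarith
        refine ⟨B r (J r), Finset.mem_union_right _ (Finset.mem_union_right _
          (Finset.mem_image_of_mem (fun r => B r (J r)) (Finset.mem_range.mpr (by omega)))), ?_⟩
        simp only [J, if_pos hcond, B, mem_eBox b hb]
        refine ⟨⟨?_, ?_⟩, hr1, hr2⟩
        · rw [h]; exact Nat.floor_le ht0
        · rw [h]; exact Nat.lt_floor_add_one _
      · -- jump
        have hc0 : c ≠ 0 := by
          rintro rfl
          have : 0 ≤ y * b ^ m := by positivity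
          simp at hyc
          linarith
        obtain ⟨r, rfl⟩ : ∃ r, c = r + 1 := ⟨c - 1, by omega⟩
        have hzz : z = 0 := by
          by_contra hne
          have hzp : 0 < z := lt_of_le_of_ne hz0 (Ne.symm hne)
          have := h ((0 + (r + 1 : ℕ)) / b) (by positivity) (by rw [hz]; gcongr)
          rw [psi_fe b m hb hm _ hc 0 le_rfl one_pos, div_le_iff₀ hpm, psi_zero] at this
          linarith
        have h2 := h ((0 + (r : ℕ)) / b) (by positivity) (by
          rw [hz, div_lt_div_iff_of_pos_right hb0]; push_cast; linarith)
        rw [psi_fe b m hb hm r (by omega) 0 le_rfl one_pos, div_le_iff₀ hpm, psi_zero] at h2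
        refine ⟨B r ((r + 1) * b ^ f), Finset.mem_union_right _ (Finset.mem_union_left _
          (Finset.mem_image_of_mem (fun r => B r ((r + 1) * b ^ f))
            (Finset.mem_range.mpr (by omega)))), ?_⟩
        simp only [B, mem_eBox b hb]
        push_cast at hyc hxz ⊢
        have : x * (b : ℝ) ^ (f + 1) = (r + 1) * b ^ f := by
          rw [pow_succ, mul_comm ((b : ℝ) ^ f), ← mul_assoc, hxz, hzz, zero_add]
        refine ⟨⟨this.ge, ?_⟩, by linarith, hyc⟩
        rw [this]; linarith

lemma cov_main (b m : ℕ) (hb : 2 ≤ b) (hm : 1 ≤ m) (D : ℕ) :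
    ∀ t, Cov b (D * (m + 1)) (Gset b m t) (3 * b ^ D - 2) := by
  induction D with
  | zero =>
    intro t
    refine ⟨{eBox b 0 0 0 0}, by simp, ?_, ?_, ?_⟩
    · intro E hE
      rw [Finset.mem_singleton] at hE
      exact ⟨0, 0, 0, 0, by simp, by simp, by simp, hE⟩
    · intro E hE F hF _
      rw [Finset.mem_singleton] at hE hF
      rw [hE, hF]
    · intro p hp
      refine ⟨_, Finset.mem_singleton_self _, ?_⟩
      rw [mem_eBox b hb]
      simpa using ⟨⟨hp.1, hp.2.1⟩, hp.2.2.1, hp.2.2.2.1⟩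
  | succ D ih =>
    intro t
    have := cov_step b m hb hm _ _ ih t
    rw [Nat.succ_mul]
    convert this using 1
    have h1 : 1 ≤ b ^ D := Nat.one_le_pow _ _ (by omega)
    obtain ⟨q, hq⟩ : ∃ q, b ^ D = q + 1 := ⟨b ^ D - 1, by omega⟩
    obtain ⟨e, rfl⟩ : ∃ e, b = e + 1 := ⟨b - 1, by omega⟩
    rw [pow_succ, hq]
    have e1 : 3 * (q + 1) - 2 = 3 * q + 1 := by omega
    rw [e1, Nat.sub_eq_iff_eq_add (by nlinarith)]
    simp only [Nat.add_sub_cancel]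
    ring

lemma count_arith (b m k F r : ℕ) (hb : 2 ≤ b) (hm : 1 ≤ m) (hk : F * (m + 1) + r = k)
    (hr : r < m + 1) :
    (3 * b ^ F - 2) * b ^ r ≤ (m + 1) * b ^ m * b ^ ((k + m) / (m + 1)) := by
  have hpow : b ^ r * b ^ F * 2 ≤ b ^ m * b ^ ((k + m) / (m + 1)) := by
    rcases Nat.eq_zero_or_pos r with h0 | h0
    · have : F ≤ (k + m) / (m + 1) := by
        rw [Nat.le_div_iff_mul_le (by omega)]
        omega
      have e1 : b ^ F ≤ b ^ ((k + m) / (m + 1)) := Nat.pow_le_pow_right (by omega) this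
      have e2 : 2 ≤ b ^ m := hb.trans (Nat.le_self_pow (by omega) b)
      rw [h0, pow_zero, one_mul, mul_comm]
      exact Nat.mul_le_mul e2 e1
    · have : F + 1 ≤ (k + m) / (m + 1) := by
        rw [Nat.le_div_iff_mul_le (by omega), Nat.succ_mul]
        omega
      have e1 : b ^ (F + 1) ≤ b ^ ((k + m) / (m + 1)) := Nat.pow_le_pow_right (by omega) this
      have e2 : b ^ r ≤ b ^ m := Nat.pow_le_pow_right (by omega) (by omega)
      have e3 : b ^ F * 2 ≤ b ^ (F + 1) := by rw [pow_succ]; exact Nat.mul_le_mul_left _ hb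
      calc b ^ r * b ^ F * 2 = b ^ r * (b ^ F * 2) := by ring
        _ ≤ _ := Nat.mul_le_mul e2 (e3.trans e1)
  have hs : (3 * b ^ F - 2) * b ^ r ≤ 3 * b ^ F * b ^ r := Nat.mul_le_mul_right _ (by omega)
  calc (3 * b ^ F - 2) * b ^ r ≤ 3 * b ^ F * b ^ r := hs
    _ ≤ 2 * (b ^ r * b ^ F * 2) := by nlinarith [Nat.zero_le (b ^ F * b ^ r)]
    _ ≤ (m + 1) * (b ^ m * b ^ ((k + m) / (m + 1))) := Nat.mul_le_mul (by omega) hpow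
    _ = _ := by ring

/-- **Covering number of the digit density `ψ_ℓ` at arbitrary order** (Example 1 of the
paper): for every `k`, `Γ_k(ψ_ℓ) ≤ ℓ b^{k/ℓ + ℓ - 1} = ℓ b^{ℓ-1} b^{⌈k/ℓ⌉}`, i.e. for
every `t ∈ [0,1]` the set `∂J_t* \ ∂[0,1]²` is covered by at most that many pairwise
disjoint `b`-adic elementary intervals of order `k`. -/
theorem covering_number_psiDigit (b : ℕ) (hb : 2 ≤ b) (ℓ : ℕ) (hℓ : 2 ≤ ℓ) (k : ℕ) :
    ∀ t ∈ Icc (0 : ℝ) 1, ∃ v : ℕ,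
      v ≤ ℓ * b ^ (ℓ - 1) * b ^ ((k + ℓ - 1) / ℓ) ∧
      ∃ U : Fin v → Set (ℝ × ℝ),
        (∀ i, IsElemInterval2 b k (U i)) ∧
        (∀ i j, i ≠ j → Disjoint (U i) (U j)) ∧
        frontier (Jstar2 b ℓ t) \ frontier unitSq ⊆ ⋃ i, U i := by
  intro t ht
  obtain ⟨m, rfl⟩ : ∃ m, ℓ = m + 1 := ⟨ℓ - 1, by omega⟩
  have hm : 1 ≤ m := by omega
  obtain ⟨S, h1, h2, h3, h4⟩ := cov_add b _ hb _ _ (k % (m + 1)) (cov_main b m hb hm (k / (m + 1)) t)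
  have hk : k / (m + 1) * (m + 1) + k % (m + 1) = k := Nat.div_add_mod' k (m + 1)
  rw [hk] at h2
  refine ⟨S.card, h1.trans ?_, fun i => (S.equivFin.symm i : Set (ℝ × ℝ)), ?_, ?_, ?_⟩
  · exact count_arith b m k _ _ hb hm hk (Nat.mod_lt _ (by omega))
  · intro i
    exact h2 _ (S.equivFin.symm i).2
  · intro i j hij
    rw [Set.disjoint_iff_inter_eq_empty, ← Set.not_nonempty_iff_eq_empty]
    intro hne
    exact hij (S.equivFin.symm.injective
      (Subtype.ext (h3 _ (S.equivFin.symm i).2 _ (S.equivFin.symm j).2 hne)))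
  · intro p hp
    obtain ⟨E, hE, hpE⟩ := h4 p (frontier_sub_s17 b m hb hm t ht hp)
    refine mem_iUnion.mpr ⟨S.equivFin ⟨E, hE⟩, ?_⟩
    simpa using hpE
end
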